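/- arXiv:1412.1714 — 8 statements merged into one kernel-verified Lean document; each statement's English description precedes it below -/
import Mathlib

section
/- Let (X, d) be a metric space and let μ be a continuous, locally convex median on X. Let a and b be distinct points of X. Then there exists a wall W = {H⁺(W), H⁻(W)} in X strongly separating a from b, i.e. such that a ∈ X \ closure(H⁻(W)) and b ∈ X \ closure(H⁺(W)). -/
/-- A median on a set `X` (the median algebra axioms). -/
def IsMedianAlgebra {X : Type*} (m : X → X → X → X) : Prop :=
  (∀ a b c, m a b c = m b a c) ∧
  (∀ a b c, m a b c = m b c a) ∧
  (∀ a b, m a a b = a) ∧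
  (∀ a b c d e, m a b (m c d e) = m (m a b c) (m a b d) e)
/-- The interval `I(a, b) = {c | μ(a,b,c) = c}`. -/
def mInterval {X : Type*} (m : X → X → X → X) (a b : X) : Set X := {c | m a b c = c}
/-- A subset `C` is convex if `I(a,b) ⊆ C` for all `a, b ∈ C`. -/
def MConvex {X : Type*} (m : X → X → X → X) (C : Set X) : Prop :=
  ∀ a ∈ C, ∀ b ∈ C, mInterval m a b ⊆ C
/-- A wall: a pair of non-empty convex disjoint subsets covering `X`. -/
def IsWall {X : Type*} (m : X → X → X → X) (Hp Hm : Set X) : Prop :=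
  Hp.Nonempty ∧ Hm.Nonempty ∧ MConvex m Hp ∧ MConvex m Hm ∧
  Disjoint Hp Hm ∧ Hp ∪ Hm = Set.univ

theorem exists_max_convex {X : Type*} (m : X → X → X → X) (A B : Set X)
    (hA : MConvex m A) (hAB : Disjoint A B) :
    ∃ C, A ⊆ C ∧ MConvex m C ∧ Disjoint C B ∧
      ∀ C', MConvex m C' → C ⊆ C' → Disjoint C' B → C' ⊆ C := by
  obtain ⟨C, hAC, hC⟩ := zorn_subset_nonempty {C | MConvex m C ∧ Disjoint C B} (by
    intro c hc hchain hne
    refine ⟨⋃₀ c, ⟨?_, ?_⟩, fun s hs => Set.subset_sUnion_of_mem hs⟩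
    · rintro x ⟨s, hs, hx⟩ y ⟨t, ht, hy⟩ z hz
      rcases hchain.total hs ht with h | h
      · exact ⟨t, ht, (hc ht).1 x (h hx) y hy hz⟩
      · exact ⟨s, hs, (hc hs).1 x hx y (h hy) hz⟩
    · rw [Set.disjoint_sUnion_left]
      exact fun s hs => (hc hs).2) A ⟨hA, hAB⟩
  exact ⟨C, hAC, hC.prop.1, hC.prop.2, fun C' h1 h2 h3 => hC.le_of_ge ⟨h1, h3⟩ h2⟩

section
variable {X : Type*} {m : X → X → X → X}

theorem med_hom (hm : IsMedianAlgebra m) (a b c d e : X) :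
    m a b (m c d e) = m (m a b c) (m a b d) (m a b e) := by
  obtain ⟨h1, h2, h3, h4⟩ := hm
  have idem : ∀ c, m a b (m a b c) = m a b c := by
    intro c
    rw [h4, h2 a b a, h2 b a a, h3, h2 a b b, h3]
  have e1 : m a b (m (m a b c) (m a b d) e) = m a b (m c d e) := by
    rw [← h4, idem]
  rw [← e1, ← h2 e, h4, idem, h2]

theorem med_pasch (hm : IsMedianAlgebra m) {x c d c' d' : X}
    (hd : m x c d = d) (hc : m x d' c' = c') :
    m d d' (m c c' d) = m c c' d := by
  have hom := med_hom hm
  obtain ⟨h1, h2, h3, h4⟩ := hm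
  have gx : m d c x = d := by rw [h1, ← h2, hd]
  have gd : m d c d = d := by rw [← h2, h3]
  have k1 : m d c (m d d' c') = m d c c' := by
    conv_rhs => rw [← hc]
    rw [hom d c d, hom d c x, gx, gd]
  have k2 : m c c' d = m d c c' := by rw [← h2]
  have k3 : m c c' d = m d c' c := by rw [h1, ← h2 d c' c]
  have fd : m d d' d = d := by rw [← h2, h3]
  calc m d d' (m c c' d) = m d d' (m d c' c) := by rw [k3]
    _ = m d (m d d' c') c := by rw [h4, fd]
    _ = m d c (m d d' c') := by rw [h1, h2]
    _ = m c c' d := by rw [k1, k2]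

theorem join_convex (hm : IsMedianAlgebra m) {C : Set X} (hC : MConvex m C) (x : X) :
    MConvex m {z | ∃ c ∈ C, m x c z = z} := by
  have hom := med_hom hm
  obtain ⟨h1, h2, h3, h4⟩ := hm
  have s23 : ∀ a b c, m a b c = m a c b := fun a b c => by rw [h1 a b c, h2 b a c]
  have h3' : ∀ a b, m a b a = a := fun a b => by rw [s23, h3]
  have h3'' : ∀ a b, m a b b = b := fun a b => by rw [h2, h3]
  rintro z1 ⟨c1, hc1, e1⟩ z2 ⟨c2, hc2, e2⟩ w (hw : m z1 z2 w = w)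
  have idem : ∀ a b c, m a b (m a b c) = m a b c := by
    intro a b c
    rw [h4, h3', h3'']
  refine ⟨m c1 c2 w, hC c1 hc1 c2 hc2 (idem _ _ _), ?_⟩
  have key : ∀ c z, m x c z = z → m w (m x w z) (m x w c) = m x w c := by
    intro c z e
    have a1 : m x w z = m x (m x w c) (m x w z) := by
      conv_lhs => rw [← e, hom, h3']
    have a2 : m (m x w c) w x = m x w c := by
      rw [h2, h2 w, s23, idem]
    calc m w (m x w z) (m x w c) = m (m x w c) w (m x w z) := by rw [← h2]
      _ = m (m x w c) w (m x (m x w c) (m x w z)) := by rw [← a1]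
      _ = m x w c := by rw [h4, a2, h3', h3]
  have assoc : ∀ a b c, m w a (m w b c) = m w (m w a b) c := by
    intro a b c; rw [h4, h3']
  have k1 := key c1 z1 e1
  have k2 := key c2 z2 e2
  have kz : m w (m x w z1) (m x w z2) = w := by
    have := hom x w z1 z2 w
    rw [hw, h3''] at this
    rw [h2, ← this]
  have fin : m w (m x w c1) (m x w c2) = w := by
    rw [← k1, ← k2, assoc, s23 w _ (m x w z2), assoc, s23 w (m x w z2), kz, h3, h3]
  have : m x w (m c1 c2 w) = w := by
    rw [hom, h3'', ← h2, fin]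
  rw [s23, this]

theorem meets_of_max (hm : IsMedianAlgebra m) {C D : Set X} (hC : MConvex m C)
    (hne : C.Nonempty)
    (hmax : ∀ C', MConvex m C' → C ⊆ C' → Disjoint C' D → C' ⊆ C) {x : X} (hx : x ∉ C) :
    ∃ c ∈ C, ∃ d ∈ D, m x c d = d := by
  by_contra hcon
  push Not at hcon
  have hj := join_convex hm hC x
  obtain ⟨h1, h2, h3, h4⟩ := hm
  obtain ⟨c0, hc0⟩ := hne
  refine hx (hmax _ hj (fun c hc => ⟨c, hc, by rw [h2, h3]⟩) ?_ ⟨c0, hc0, by rw [← h2, h3]⟩)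
  rw [Set.disjoint_left]
  rintro z ⟨c, hc, e⟩ hz
  exact hcon c hc z hz e

end

/-- Two distinct points of a metric space with a continuous, locally convex median
are strongly separated by a wall. -/
theorem wall_strongly_separating_points {X : Type*} [MetricSpace X]
    (m : X → X → X → X) (hmed : IsMedianAlgebra m)
    (hcont : Continuous fun p : X × X × X => m p.1 p.2.1 p.2.2)
    (hlc : ∀ x : X, ∀ U ∈ nhds x, ∃ V ∈ nhds x, V ⊆ U ∧ MConvex m V)
    (a b : X) (hab : a ≠ b) :
    ∃ Hp Hm : Set X, IsWall m Hp Hm ∧ a ∉ closure Hm ∧ b ∉ closure Hp := by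
  obtain ⟨U, V, hU, hV, hUV⟩ := t2_separation_nhds hab
  obtain ⟨A, hA, hAU, hAc⟩ := hlc a U hU
  obtain ⟨B, hB, hBV, hBc⟩ := hlc b V hV
  obtain ⟨C, hAC, hCc, hCB, hCmax⟩ := exists_max_convex m A B hAc (hUV.mono hAU hBV)
  obtain ⟨D, hBD, hDc, hDC, hDmax⟩ := exists_max_convex m B C hBc hCB.symm
  have haC : a ∈ C := hAC (mem_of_mem_nhds hA)
  have hbD : b ∈ D := hBD (mem_of_mem_nhds hB)
  have hcl : ∀ (p : X) (P Q S : Set X), P ∈ nhds p → P ⊆ Q → Disjoint Q S → p ∉ closure S := by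
    intro p P Q S hP hPQ hQS hp
    obtain ⟨z, hz1, hz2⟩ := mem_closure_iff_nhds.1 hp P hP
    exact Set.disjoint_left.1 hQS (hPQ hz1) hz2
  refine ⟨C, D, ⟨⟨a, haC⟩, ⟨b, hbD⟩, hCc, hDc, hDC.symm, ?_⟩,
    hcl a A C D hA hAC hDC.symm, hcl b B D C hB hBD hDC⟩
  by_contra hne
  obtain ⟨x, hx⟩ := (Set.ne_univ_iff_exists_notMem _).1 hne
  rw [Set.mem_union, not_or] at hx
  obtain ⟨c, hc, d, hd, e1⟩ := meets_of_max (D := D) hmed hCc ⟨a, haC⟩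
    (fun C' k1 k2 k3 => hCmax C' k1 k2 (k3.mono_right hBD)) hx.1
  obtain ⟨d', hd', c', hc', e2⟩ := meets_of_max (D := C) hmed hDc ⟨b, hbD⟩ hDmax hx.2
  have hp := med_pasch hmed e1 e2
  refine Set.disjoint_left.1 hDC (hDc d hd d' hd' hp) (hCc c hc c' hc' ?_)
  obtain ⟨h1, h2, h3, h4⟩ := hmed
  show m c c' (m c c' d) = m c c' d
  rw [h4, ← h2 c c c', h3, h2 c c' c', h3]
end

section
/- Let (X, d) be a metric space and let μ be a continuous, locally convex median on X. For each wall W = {H⁺(W), H⁻(W)} in X, the subset L(W) = closure(H⁺(W)) ∩ closure(H⁻(W)) is a convex subset of X closed under μ (a median subalgebra); moreover, if μ has rank at most r, then L(W) with the restricted median has rank at most r − 1. -/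
/-- The coordinatewise median on the cube `{0,1}ⁿ`. -/
def bmed {n : ℕ} (x y z : Fin n → Bool) : Fin n → Bool :=
  fun i => (x i && y i) || (y i && z i) || (x i && z i)

section MedianHelpers

variable {X : Type*} {m : X → X → X → X}

lemma IMA.c12 (h : IsMedianAlgebra m) (a b c : X) : m a b c = m b a c := h.1 a b c
lemma IMA.rot (h : IsMedianAlgebra m) (a b c : X) : m a b c = m b c a := h.2.1 a b c
lemma IMA.c23 (h : IsMedianAlgebra m) (a b c : X) : m a b c = m a c b := by
  rw [IMA.c12 h a b c, IMA.rot h b a c]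
lemma IMA.aab (h : IsMedianAlgebra m) (a b : X) : m a a b = a := h.2.2.1 a b
lemma IMA.aba (h : IsMedianAlgebra m) (a b : X) : m a b a = a := by
  rw [IMA.c23 h, IMA.aab h]
lemma IMA.baa (h : IsMedianAlgebra m) (a b : X) : m b a a = a := by
  rw [IMA.rot h, IMA.aab h]
lemma IMA.ax (h : IsMedianAlgebra m) (a b c d e : X) :
    m a b (m c d e) = m (m a b c) (m a b d) e := h.2.2.2 a b c d e
lemma IMA.idem (h : IsMedianAlgebra m) (a b x : X) : m a b (m a b x) = m a b x := by
  rw [IMA.ax h, IMA.aba h, IMA.baa h]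
lemma IMA.dist (h : IsMedianAlgebra m) (a b c d e : X) :
    m a b (m c d e) = m (m a b c) (m a b d) (m a b e) := by
  rw [← IMA.idem h a b (m c d e), IMA.ax h a b c d e,
    IMA.c23 h (m a b c) (m a b d) e, IMA.ax h a b (m a b c) e (m a b d), IMA.idem h,
    IMA.c23 h]

lemma IMA.conv (h : IsMedianAlgebra m) {C : Set X} (hC : MConvex m C) {x y : X}
    (hx : x ∈ C) (hy : y ∈ C) (z : X) : m x y z ∈ C :=
  hC x hx y hy (IMA.idem h x y z)

lemma IMA.mem_med (h : IsMedianAlgebra m) {a q x y z : X} (hx : m a q x = x)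
    (hy : m a q y = y) (hz : m a q z = z) : m a q (m x y z) = m x y z := by
  rw [IMA.dist h, hx, hy, hz]

/-- The interval between `a` and `q`, as a type. -/
@[ext] structure MI (m : X → X → X → X) (a q : X) where
  /-- the underlying point -/
  val : X
  /-- it lies in the interval -/
  prop : m a q val = val

/-- The lattice structure on an interval. -/
@[reducible] def MI.lat (h : IsMedianAlgebra m) (a q : X) : Lattice (MI m a q) :=
  letI : Max (MI m a q) := ⟨fun x y => ⟨m q x.1 y.1, IMA.mem_med h (IMA.baa h q a) x.2 y.2⟩⟩
  letI : Min (MI m a q) := ⟨fun x y => ⟨m a x.1 y.1, IMA.mem_med h (IMA.aba h a q) x.2 y.2⟩⟩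
  Lattice.mk' (fun x y => MI.ext (IMA.c23 h _ _ _))
    (fun x y z => MI.ext (by
      change m q (m q x.1 y.1) z.1 = m q x.1 (m q y.1 z.1)
      rw [IMA.ax h q x.1 q y.1 z.1, IMA.aba h]))
    (fun x y => MI.ext (IMA.c23 h _ _ _))
    (fun x y z => MI.ext (by
      change m a (m a x.1 y.1) z.1 = m a x.1 (m a y.1 z.1)
      rw [IMA.ax h a x.1 a y.1 z.1, IMA.aba h]))
    (fun x y => MI.ext (by
      change m q x.1 (m a x.1 y.1) = x.1
      rw [IMA.ax h, IMA.baa h, IMA.c23 h q, IMA.c12 h q a, x.2, IMA.aab h]))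
    (fun x y => MI.ext (by
      change m a x.1 (m q x.1 y.1) = x.1
      rw [IMA.ax h, IMA.baa h, IMA.c23 h a, x.2, IMA.aab h]))

/-- The distributive lattice structure on an interval. -/
@[reducible] def MI.dlat (h : IsMedianAlgebra m) (a q : X) : DistribLattice (MI m a q) :=
  letI := MI.lat h a q
  DistribLattice.ofInfSupLe (fun x y z => by
    have e : x ⊓ (y ⊔ z) = x ⊓ ((x ⊓ y) ⊔ (x ⊓ z)) := MI.ext (by
      change m a x.1 (m q y.1 z.1) = m a x.1 (m q (m a x.1 y.1) (m a x.1 z.1))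
      rw [IMA.dist h a x.1 q, IMA.dist h a x.1 q, IMA.idem h, IMA.idem h])
    rw [e]
    exact inf_le_right)

lemma maj_le {α : Type*} [DistribLattice α] (x y z : α) :
    (x ⊔ y) ⊓ (y ⊔ z) ⊓ (x ⊔ z) ≤ (x ⊓ y) ⊔ (y ⊓ z) ⊔ (x ⊓ z) := by
  have e : (x ⊔ y) ⊓ (y ⊔ z) = y ⊔ x ⊓ z := by rw [sup_comm x y, ← sup_inf_left]
  rw [e, inf_sup_right, inf_sup_left]
  refine sup_le (sup_le ?_ ?_) ?_
  · rw [inf_comm y x]; exact le_sup_left.trans le_sup_left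
  · exact le_sup_right.trans le_sup_left
  · exact inf_le_left.trans le_sup_right

lemma MI.med_eq (h : IsMedianAlgebra m) (a q : X) (x y z : MI m a q) :
    letI := MI.dlat h a q
    ((x ⊓ y) ⊔ (y ⊓ z) ⊔ (x ⊓ z)).1 = m x.1 y.1 z.1 := by
  letI := MI.dlat h a q
  let M : MI m a q := ⟨m x.1 y.1 z.1, IMA.mem_med h x.2 y.2 z.2⟩
  suffices hh : (x ⊓ y) ⊔ (y ⊓ z) ⊔ (x ⊓ z) = M from congrArg MI.val hh
  have hinf : ∀ t : MI m a q, (t ⊓ M).1 = m (t ⊓ x).1 (t ⊓ y).1 (t ⊓ z).1 :=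
    fun t => IMA.dist h a t.1 x.1 y.1 z.1
  have hsup : ∀ t : MI m a q, (t ⊔ M).1 = m (t ⊔ x).1 (t ⊔ y).1 (t ⊔ z).1 :=
    fun t => IMA.dist h q t.1 x.1 y.1 z.1
  apply le_antisymm
  · refine sup_le (sup_le ?_ ?_) ?_
    · rw [← inf_eq_left]; apply MI.ext; rw [hinf, inf_eq_left.2 (inf_le_left : x ⊓ y ≤ x),
        inf_eq_left.2 (inf_le_right : x ⊓ y ≤ y), IMA.aab h]
    · rw [← inf_eq_left]; apply MI.ext; rw [hinf, inf_eq_left.2 (inf_le_left : y ⊓ z ≤ y),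
        inf_eq_left.2 (inf_le_right : y ⊓ z ≤ z), IMA.baa h]
    · rw [← inf_eq_left]; apply MI.ext; rw [hinf, inf_eq_left.2 (inf_le_left : x ⊓ z ≤ x),
        inf_eq_left.2 (inf_le_right : x ⊓ z ≤ z), IMA.aba h]
  · refine le_trans (le_inf (le_inf ?_ ?_) ?_) (maj_le x y z)
    · rw [← sup_eq_left]; apply MI.ext; rw [hsup, sup_eq_left.2 (le_sup_left : x ≤ x ⊔ y),
        sup_eq_left.2 (le_sup_right : y ≤ x ⊔ y), IMA.aab h]
    · rw [← sup_eq_left]; apply MI.ext; rw [hsup, sup_eq_left.2 (le_sup_left : y ≤ y ⊔ z),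
        sup_eq_left.2 (le_sup_right : z ≤ y ⊔ z), IMA.baa h]
    · rw [← sup_eq_left]; apply MI.ext; rw [hsup, sup_eq_left.2 (le_sup_left : x ≤ x ⊔ z),
        sup_eq_left.2 (le_sup_right : z ≤ x ⊔ z), IMA.aba h]

/-- A family of elements pairwise meeting in `c` spans a Boolean cube. -/
lemma exists_cube_hom {α : Type*} [DistribLattice α] [OrderBot α] {N : ℕ} (c : α) (E : Fin N → α)
    (hc : ∀ i, c ≤ E i) (hne : ∀ i, E i ≠ c) (hd : ∀ i j, i ≠ j → E i ⊓ E j ≤ c) :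
    ∃ F : (Fin N → Bool) → α, Function.Injective F ∧
      ∀ x y z, F (bmed x y z) = (F x ⊓ F y) ⊔ (F y ⊓ F z) ⊔ (F x ⊓ F z) := by
  classical
  let F : (Fin N → Bool) → α := fun x => c ⊔ Finset.univ.sup (fun i => if x i then E i else ⊥)
  have hcF : ∀ x, c ≤ F x := fun x => le_sup_left
  have hEF : ∀ x i, x i = true → E i ≤ F x := fun x i hi => by
    refine le_trans ?_ (le_sup_right : _ ≤ F x)
    refine le_trans ?_ (Finset.le_sup (Finset.mem_univ i))
    simp [hi]
  have hle : ∀ x t, c ≤ t → (∀ i, x i = true → E i ≤ t) → F x ≤ t := fun x t h1 h2 => by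
    refine sup_le h1 (Finset.sup_le fun i _ => ?_)
    by_cases hi : x i = true
    · simpa [hi] using h2 i hi
    · simp [hi]
  have hinfle : ∀ x t s, c ⊓ t ≤ s → (∀ i, x i = true → E i ⊓ t ≤ s) → F x ⊓ t ≤ s :=
    fun x t s h1 h2 => by
    change (c ⊔ _) ⊓ t ≤ s
    rw [inf_sup_right, Finset.sup_inf_distrib_right]
    refine sup_le h1 (Finset.sup_le fun i _ => ?_)
    by_cases hi : x i = true
    · simpa [hi] using h2 i hi
    · simp [hi]
  have hEt : ∀ x i, x i = false → E i ⊓ F x ≤ c := fun x i hi => by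
    rw [inf_comm]
    refine hinfle x _ _ inf_le_left fun j hj => hd j i ?_
    rintro rfl
    simp [hi] at hj
  have hpair : ∀ x y w : Fin N → Bool, (∀ i, x i = true → y i = true → w i = true) →
      F x ⊓ F y ≤ F w := fun x y w hw => by
    refine hinfle x _ _ (inf_le_left.trans (hcF w)) fun i hi => ?_
    by_cases hy : y i = true
    · exact inf_le_left.trans (hEF w i (hw i hi hy))
    · exact (hEt y i (by simpa using hy)).trans (hcF w)
  refine ⟨F, ?_, ?_⟩
  · have key : ∀ x y, F x = F y → ∀ i, x i = true → y i = true := fun x y hxy i hi => by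
      by_contra hy
      have h1 := hEt y i (by simpa using hy)
      rw [← hxy, inf_eq_left.2 (hEF x i hi)] at h1
      exact hne i (le_antisymm h1 (hc i))
    intro x y hxy
    funext i
    have h1 := key x y hxy i
    have h2 := key y x hxy.symm i
    cases hx : x i <;> cases hy : y i <;> simp_all
  · intro x y z
    apply le_antisymm
    · refine hle _ _ (le_trans (le_inf (hcF x) (hcF z)) le_sup_right) fun i hi => ?_
      have : (x i = true ∧ y i = true) ∨ (y i = true ∧ z i = true) ∨
          (x i = true ∧ z i = true) := by
        simpa [bmed, or_assoc] using hi
      rcases this with ⟨h1, h2⟩ | ⟨h1, h2⟩ | ⟨h1, h2⟩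
      · exact (le_inf (hEF _ i h1) (hEF _ i h2)).trans (le_sup_left.trans le_sup_left)
      · exact (le_inf (hEF _ i h1) (hEF _ i h2)).trans (le_sup_right.trans le_sup_left)
      · exact (le_inf (hEF _ i h1) (hEF _ i h2)).trans le_sup_right
    · refine sup_le (sup_le ?_ ?_) ?_ <;> refine hpair _ _ _ fun i h1 h2 => ?_ <;>
        simp [bmed, h1, h2]

/-- Cube from pairwise almost orthogonal elements in an interval. -/
lemma exists_cube (h : IsMedianAlgebra m) {N : ℕ} (a q c : X) (w : Fin N → X)
    (hcI : m a q c = c) (hw : ∀ i, m a q (w i) = w i)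
    (hd : ∀ i j, i ≠ j → m a (m a (w i) (w j)) c = m a (w i) (w j))
    (hne : ∀ i, m q (w i) c ≠ c) :
    ∃ F : (Fin N → Bool) → X, Function.Injective F ∧
      ∀ x y z, F (bmed x y z) = m (F x) (F y) (F z) := by
  letI := MI.dlat h a q
  letI : OrderBot (MI m a q) :=
    { bot := ⟨a, IMA.aba h a q⟩
      bot_le := fun x => inf_eq_left.1 (MI.ext (IMA.aab h a x.1)) }
  let C : MI m a q := ⟨c, hcI⟩
  let W : Fin N → MI m a q := fun i => ⟨w i, hw i⟩
  obtain ⟨F, hF, hm⟩ := exists_cube_hom C (fun i => W i ⊔ C) (fun i => le_sup_right)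
    (fun i hi => hne i (congrArg MI.val hi))
    (fun i j hij => by
      rw [← sup_inf_right]
      exact sup_le (inf_eq_left.1 (MI.ext (hd i j hij))) le_rfl)
  refine ⟨fun x => (F x).1, fun x y hxy => hF (MI.ext hxy), fun x y z => ?_⟩
  change (F (bmed x y z)).val = m (F x).val (F y).val (F z).val
  rw [hm, MI.med_eq h]

end MedianHelpers

section TopHelpers
open Filter Topology

variable {X : Type*} [MetricSpace X] {m : X → X → X → X}

lemma tendsto_m (hcont : Continuous fun p : X × X × X => m p.1 p.2.1 p.2.2)
    {u v w : ℕ → X} {a b c : X} (hu : Tendsto u atTop (𝓝 a)) (hv : Tendsto v atTop (𝓝 b))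
    (hw : Tendsto w atTop (𝓝 c)) : Tendsto (fun k => m (u k) (v k) (w k)) atTop (𝓝 (m a b c)) :=
  (hcont.tendsto (a, b, c)).comp (hu.prodMk_nhds (hv.prodMk_nhds hw))

lemma closure_conv (h : IsMedianAlgebra m)
    (hcont : Continuous fun p : X × X × X => m p.1 p.2.1 p.2.2) {C : Set X} (hC : MConvex m C) :
    MConvex m (closure C) := by
  intro a ha b hb c hc
  obtain ⟨u, hu, hu'⟩ := mem_closure_iff_seq_limit.1 ha
  obtain ⟨v, hv, hv'⟩ := mem_closure_iff_seq_limit.1 hb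
  have := tendsto_m hcont hu' hv' (tendsto_const_nhds (x := c))
  rw [show m a b c = c from hc] at this
  exact mem_closure_of_tendsto this (Eventually.of_forall fun k => IMA.conv h hC (hu k) (hv k) c)

lemma exists_upper (h : IsMedianAlgebra m)
    (hcont : Continuous fun p : X × X × X => m p.1 p.2.1 p.2.2) {C : Set X} (hC : MConvex m C)
    {a q : ℕ → X} {p t : X} (ha : Tendsto a atTop (𝓝 p)) (hq : Tendsto q atTop (𝓝 t))
    (haC : ∀ k, a k ∈ C) {ι : Type*} (s : ι → ℕ → X) (hsI : ∀ i k, m (a k) (q k) (s i k) = s i k)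
    (hsC : ∀ i k, s i k ∈ C) (hs : ∀ i, Tendsto (s i) atTop (𝓝 p)) (S : Finset ι) :
    ∃ c : ℕ → X, (∀ k, m (a k) (q k) (c k) = c k) ∧ (∀ k, c k ∈ C) ∧ Tendsto c atTop (𝓝 p) ∧
      ∀ i ∈ S, ∀ k, m (a k) (s i k) (c k) = s i k := by
  classical
  induction S using Finset.induction_on with
  | empty => exact ⟨a, fun k => IMA.aba h _ _, haC, ha, by simp⟩
  | insert j S hj ih =>
    obtain ⟨c, h1, h2, h3, h4⟩ := ih
    refine ⟨fun k => m (q k) (s j k) (c k), fun k =>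
      IMA.mem_med h (IMA.baa h _ _) (hsI j k) (h1 k), fun k => ?_, ?_, ?_⟩
    · beta_reduce
      rw [IMA.rot h]
      exact IMA.conv h hC (hsC j k) (h2 k) _
    · have := tendsto_m hcont hq (hs j) h3
      rwa [IMA.baa h] at this
    · intro i hi k
      letI := MI.dlat h (a k) (q k)
      let si : MI m (a k) (q k) := ⟨s i k, hsI i k⟩
      let sj : MI m (a k) (q k) := ⟨s j k, hsI j k⟩
      let cc : MI m (a k) (q k) := ⟨c k, h1 k⟩
      have hle : si ≤ sj ⊔ cc := by
        rcases Finset.mem_insert.1 hi with rfl | hi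
        · exact le_sup_left
        · exact le_trans (inf_eq_left.1 (MI.ext (h4 i hi k))) le_sup_right
      exact congrArg MI.val (inf_eq_left.2 hle)

lemma exists_big_cube (h : IsMedianAlgebra m)
    (hcont : Continuous fun p : X × X × X => m p.1 p.2.1 p.2.2)
    {Hp Hm : Set X} (hW : IsWall m Hp Hm) {n : ℕ} (f : (Fin n → Bool) → X)
    (hf : Function.Injective f) (hfm : ∀ x y z, f (bmed x y z) = m (f x) (f y) (f z))
    (hr : Set.range f ⊆ closure Hp ∩ closure Hm) :
    ∃ F : (Fin (n + 1) → Bool) → X, Function.Injective F ∧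
      ∀ x y z, F (bmed x y z) = m (F x) (F y) (F z) := by
  obtain ⟨-, -, hP, hM, hdis, -⟩ := hW
  let z : Fin n → Bool := fun _ => false
  let o : Fin n → Bool := fun _ => true
  let u : Fin n → Fin n → Bool := fun i j => decide (i = j)
  have hp : ∀ x, ∃ s : ℕ → X, (∀ k, s k ∈ Hp) ∧ Tendsto s atTop (𝓝 (f x)) := fun x =>
    mem_closure_iff_seq_limit.1 (hr ⟨x, rfl⟩).1
  have hm : ∀ x, ∃ s : ℕ → X, (∀ k, s k ∈ Hm) ∧ Tendsto s atTop (𝓝 (f x)) := fun x =>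
    mem_closure_iff_seq_limit.1 (hr ⟨x, rfl⟩).2
  choose P hPm hPt using hp
  choose M hMm hMt using hm
  -- labels of the limits of the new atoms
  let l : Fin (n + 1) → Fin n → Bool := Fin.cons z u
  let w0 : Fin (n + 1) → ℕ → X := Fin.cons (P z) (fun i => M (u i))
  have hw0 : ∀ i, Tendsto (w0 i) atTop (𝓝 (f (l i))) := fun i => by
    refine Fin.cases ?_ (fun i => ?_) i
    · exact hPt z
    · exact hMt (u i)
  let w : Fin (n + 1) → ℕ → X := fun i k => m (M z k) (P o k) (w0 i k)
  have hbo : ∀ x, bmed z o x = x := fun x => by funext i; simp [bmed, z, o]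
  have hbo' : ∀ x, bmed o x z = x := fun x => by funext i; simp [bmed, z, o]
  have hwI : ∀ i k, m (M z k) (P o k) (w i k) = w i k := fun i k => IMA.idem h _ _ _
  have hwt : ∀ i, Tendsto (w i) atTop (𝓝 (f (l i))) := fun i => by
    have := tendsto_m hcont (hMt z) (hPt o) (hw0 i)
    rwa [← hfm, hbo] at this
  have hwP : ∀ k, w 0 k ∈ Hp := fun k => by
    change m (M z k) (P o k) (P z k) ∈ Hp
    rw [IMA.rot h]
    exact IMA.conv h hP (hPm _ _) (hPm _ _) _
  have hwM : ∀ i : Fin n, ∀ k, w i.succ k ∈ Hm := fun i k => by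
    change m (M z k) (P o k) (M (u i) k) ∈ Hm
    rw [IMA.c23 h]
    exact IMA.conv h hM (hMm _ _) (hMm _ _) _
  have hwM' : ∀ i, i ≠ 0 → ∀ k, w i k ∈ Hm := fun i hi k => by
    obtain ⟨j, rfl⟩ := Fin.exists_succ_eq.2 hi
    exact hwM j k
  have hl : ∀ i j, i ≠ j → bmed z (l i) (l j) = z := by
    intro i j
    refine Fin.cases ?_ (fun i => ?_) i <;> refine Fin.cases ?_ (fun j => ?_) j <;> intro hij <;>
      funext t <;> simp [bmed, z, l, u]
    rintro rfl rfl
    exact hij rfl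
  let ι := {p : Fin (n + 1) × Fin (n + 1) // p.1 ≠ p.2}
  obtain ⟨c, hcI, hcM, hct, hcu⟩ := exists_upper h hcont hM (hMt z) (hPt o) (hMm z)
    (ι := ι) (fun p k => m (M z k) (w p.1.1 k) (w p.1.2 k))
    (fun p k => IMA.mem_med h (IMA.aba h _ _) (hwI _ _) (hwI _ _))
    (fun p k => by
      by_cases h0 : p.1.1 = 0
      · have h1 : p.1.2 ≠ 0 := fun h1 => p.2 (h0.trans h1.symm)
        change m (M z k) (w p.1.1 k) (w p.1.2 k) ∈ Hm
        rw [IMA.c23 h]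
        exact IMA.conv h hM (hMm _ _) (hwM' _ h1 k) _
      · exact IMA.conv h hM (hMm _ _) (hwM' _ h0 k) _)
    (fun p => by
      have := tendsto_m hcont (hMt z) (hwt p.1.1) (hwt p.1.2)
      rwa [← hfm, hl _ _ p.2] at this) Finset.univ
  have hev : ∀ᶠ k in atTop, ∀ i : Fin n, m (P o k) (w i.succ k) (c k) ≠ c k := by
    rw [eventually_all]
    intro i
    have := tendsto_m hcont (hPt o) (hwt i.succ) hct
    rw [← hfm, hbo'] at this
    suffices hne : f (l i.succ) ≠ f z from
      (this.prodMk_nhds hct).eventually (isOpen_ne_fun continuous_fst continuous_snd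
        |>.mem_nhds hne)
    intro he
    have := congrFun (hf he) i
    simp [l, u, z] at this
  obtain ⟨k, hk⟩ := hev.exists
  refine exists_cube h (M z k) (P o k) (c k) (fun i => w i k) (hcI k) (fun i => hwI i k)
    (fun i j hij => hcu ⟨(i, j), hij⟩ (Finset.mem_univ _) k) fun i => ?_
  refine Fin.cases ?_ (fun i => hk i) i
  intro he
  refine Set.disjoint_left.1 hdis ?_ (hcM k)
  rw [← he]
  exact IMA.conv h hP (hPm _ _) (hwP k) _

end TopHelpers

/-- For a wall `W` in a metric space with a continuous locally convex median, the subset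
`L(W)` is a convex median subalgebra, of rank at most `r - 1` if the median has rank `≤ r`. -/
theorem wall_boundary_convex_subalgebra_rank {X : Type*} [MetricSpace X]
    (m : X → X → X → X) (hmed : IsMedianAlgebra m)
    (hcont : Continuous fun p : X × X × X => m p.1 p.2.1 p.2.2)
    (hlc : ∀ x : X, ∀ U ∈ nhds x, ∃ V ∈ nhds x, V ⊆ U ∧ MConvex m V)
    (Hp Hm : Set X) (hW : IsWall m Hp Hm) :
    MConvex m (closure Hp ∩ closure Hm) ∧
    (∀ x ∈ closure Hp ∩ closure Hm, ∀ y ∈ closure Hp ∩ closure Hm,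
      ∀ z ∈ closure Hp ∩ closure Hm, m x y z ∈ closure Hp ∩ closure Hm) ∧
    (∀ r : ℕ,
      (∀ n : ℕ, ∀ f : (Fin n → Bool) → X, Function.Injective f →
        (∀ x y z, f (bmed x y z) = m (f x) (f y) (f z)) → n ≤ r) →
      ∀ n : ℕ, ∀ f : (Fin n → Bool) → X, Function.Injective f →
        (∀ x y z, f (bmed x y z) = m (f x) (f y) (f z)) →
        Set.range f ⊆ closure Hp ∩ closure Hm → (n : ℤ) ≤ (r : ℤ) - 1) := by
  have hW' := hW
  obtain ⟨-, -, hP, hM, -, -⟩ := hW'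
  have hc : MConvex m (closure Hp ∩ closure Hm) := fun a ha b hb c hcc =>
    ⟨closure_conv hmed hcont hP a ha.1 b hb.1 hcc, closure_conv hmed hcont hM a ha.2 b hb.2 hcc⟩
  refine ⟨hc, fun x hx y hy z _ => IMA.conv hmed hc hx hy z, ?_⟩
  intro r hr n f hf hfm hrange
  obtain ⟨F, hF, hFm⟩ := exists_big_cube hmed hcont hW f hf hfm hrange
  have := hr (n + 1) F hF hFm
  omega
end

section
/- Let X be a connected metric space with a continuous, locally convex median μ, let f : {0,1}ʳ → X be a median embedding of the r-cube, and let W be a wall in X strongly separating f(0,…,0) and f(1,0,…,0). Then there exists a median embedding g : {0,1}ʳ → X such that g(t) = f(t) for every t ∈ {0} × {0,1}^{r−1}, and g(t) ∈ L(W) = closure(H⁺(W)) ∩ closure(H⁻(W)) for every t ∈ {1} × {0,1}^{r−1}. -/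
/-- Pushing half of a median cube into the boundary `L(W)` of a wall `W` strongly
separating two adjacent vertices of the cube. -/
theorem cube_pushed_into_wall_boundary {X : Type*} [MetricSpace X] [ConnectedSpace X]
    (m : X → X → X → X) (hmed : IsMedianAlgebra m)
    (hcont : Continuous fun p : X × X × X => m p.1 p.2.1 p.2.2)
    (hlc : ∀ x : X, ∀ U ∈ nhds x, ∃ V ∈ nhds x, V ⊆ U ∧ MConvex m V)
    (r : ℕ) (hr : 0 < r) (f : (Fin r → Bool) → X)
    (hfinj : Function.Injective f)
    (hfmed : ∀ x y z, f (bmed x y z) = m (f x) (f y) (f z))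
    (Hp Hm : Set X) (hW : IsWall m Hp Hm)
    (hsepa : f (fun _ => false) ∉ closure Hm)
    (hsepb : f (Function.update (fun _ => false) ⟨0, hr⟩ true) ∉ closure Hp) :
    ∃ g : (Fin r → Bool) → X, Function.Injective g ∧
      (∀ x y z, g (bmed x y z) = m (g x) (g y) (g z)) ∧
      (∀ t, t ⟨0, hr⟩ = false → g t = f t) ∧
      (∀ t, t ⟨0, hr⟩ = true → g t ∈ closure Hp ∩ closure Hm) := by
  classical
  obtain ⟨hs1, hs2, hid, hdist⟩ := hmed
  obtain ⟨⟨p0, hp0⟩, ⟨q0, hq0⟩, hcp, hcm, hdisj, hun⟩ := hW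
  have hidR : ∀ a b, m a b b = b := fun a b => by rw [hs2, hid]
  have hidM : ∀ a b, m a b a = a := fun a b => by rw [hs1, hidR]
  have hmem : ∀ H : Set X, MConvex m H → ∀ p ∈ H, ∀ q ∈ H, ∀ z, m p q z ∈ H := by
    intro H hH p hp q hq z
    apply hH p hp q hq
    change m p q (m p q z) = m p q z
    rw [hdist, hidM, hidR]
  have hor : ∀ x, x ∈ Hp ∨ x ∈ Hm := fun x => by
    have : x ∈ Hp ∪ Hm := by rw [hun]; trivial
    exact this
  set i0 : Fin r := ⟨0, hr⟩ with hi0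
  set N : Fin r → Bool := fun _ => false with hN
  set E : Fin r → Bool := Function.update N i0 true with hE
  set T : Fin r → Bool := fun _ => true with hT
  let ρ : (Fin r → Bool) → (Fin r → Bool) := fun x => Function.update x i0 false
  have hρ : ∀ x, x i0 = false → ρ x = x := fun x hx => by
    simp only [ρ]; rw [← hx]; exact Function.update_eq_self _ _
  have contL : ∀ b c : X, Continuous fun x => m x b c := fun b c =>
    hcont.comp (by fun_prop : Continuous fun x : X => ((x, b, c) : X × X × X))
  have hA : f N ∈ Hp := (hor _).resolve_right fun h => hsepa (subset_closure h)
  have hB : f E ∈ Hm := (hor _).resolve_left fun h => hsepb (subset_closure h)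
  have hB' : f T ∈ Hm := by
    refine (hor _).resolve_left fun h => hsepb (subset_closure ?_)
    have h1 : bmed N T E = E := by
      funext i; simp [bmed, hN, hT]
    have := hmem Hp hcp _ hA _ h (f E)
    rwa [← hfmed, h1] at this
  have hzero : ∀ x, f (ρ x) ∉ closure Hm := by
    intro x hx
    have h1 : bmed (ρ x) E N = N := by
      funext i; by_cases hi : i = i0 <;> simp [bmed, ρ, hN, hE, Function.update, hi]
    have := map_mem_closure (contL (f E) (f N)) hx
      (fun y hy => hmem Hm hcm y hy _ hB (f N))
    rw [← hfmed, h1] at this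
    exact hsepa this
  have hzp : ∀ x, f (ρ x) ∈ Hp := fun x =>
    (hor _).resolve_right fun h => hzero x (subset_closure h)
  obtain ⟨c, hc1, hc2⟩ : ∃ c, c ∈ closure Hp ∧ c ∈ closure Hm := by
    have hpre := (isPreconnected_univ (α := X))
    rw [isPreconnected_closed_iff] at hpre
    obtain ⟨c, -, h⟩ := hpre (closure Hp) (closure Hm) isClosed_closure isClosed_closure
      (fun x _ => (hor x).imp (fun h => subset_closure h) (fun h => subset_closure h))
      ⟨p0, trivial, subset_closure hp0⟩ ⟨q0, trivial, subset_closure hq0⟩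
    exact ⟨c, h.1, h.2⟩
  -- projecting along an interval crossing the wall preserves its boundary
  have hproj : ∀ p ∈ Hp, ∀ q ∈ Hm, ∀ z, z ∈ closure Hp → z ∈ closure Hm →
      m z p q ∈ closure Hp ∧ m z p q ∈ closure Hm := by
    intro p hp q hq z hz1 hz2
    refine ⟨map_mem_closure (f := fun x => m x p q) (contL p q) hz1 fun y hy => hmem Hp hcp y hy p hp q,
      map_mem_closure (f := fun x => m x p q) (contL p q) hz2 fun y hy => ?_⟩
    have := hmem Hm hcm q hq y hy p
    rw [hs2] at this
    exact this
  obtain ⟨d, hd⟩ : ∃ d, d = m c (f N) (f E) := ⟨_, rfl⟩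
  have hdc := hproj _ hA _ hB c hc1 hc2
  rw [← hd] at hdc
  let G : (Fin r → Bool) → X := fun x => m d (f T) (f (ρ x))
  have hG : ∀ x, G x ∈ closure Hp ∧ G x ∈ closure Hm := by
    intro x
    have := hproj _ (hzp x) _ hB' d hdc.1 hdc.2
    have h2 : m d (f (ρ x)) (f T) = G x := by
      simp only [G]; rw [hs1, hs2, hs1, hs2, hs2, hs1]
    rwa [h2] at this
  have hρb : ∀ x y z, bmed (ρ x) (ρ y) (ρ z) = ρ (bmed x y z) := by
    intro x y z
    funext i; by_cases hi : i = i0 <;> simp [bmed, ρ, Function.update, hi]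
  -- one point in the top face
  have hone : ∀ x y z, m (f (ρ y)) (f (ρ z)) (G x) = f (bmed (ρ y) (ρ z) (ρ x)) := by
    intro x y z
    have e1 : m (f (ρ y)) (f (ρ z)) d = f (bmed (ρ y) (ρ z) N) := by
      have : bmed (ρ y) (ρ z) E = bmed (ρ y) (ρ z) N := by
        funext i; by_cases hi : i = i0 <;> simp [bmed, ρ, hN, hE, Function.update, hi]
      have h3 : d = m (f N) (f E) c := by rw [hd, hs2]
      rw [h3, hdist, ← hfmed, ← hfmed, this, hid]
    simp only [G]
    rw [hdist, e1, ← hfmed, ← hfmed]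
    congr 1
    funext i
    simp only [bmed, hN, hT]
    cases ρ y i <;> cases ρ z i <;> cases ρ x i <;> rfl
  -- two points in the top face
  have htwo : ∀ x y z, m (G x) (G y) (f (ρ z)) = G (bmed x y z) := by
    intro x y z
    simp only [G]
    rw [← hdist, ← hρb, hfmed]
  have hthree : ∀ x y z, m (G x) (G y) (G z) = G (bmed x y z) := by
    intro x y z
    have h1 : m d (f T) (G z) = G z := by
      simp only [G]; rw [hdist, hidM, hidR]
    have h2 : m d (f T) (m (G x) (G y) (f (ρ z))) = m (G x) (G y) (G z) := by
      have h4 : m (G x) (G y) (f (ρ z)) = m (f (ρ z)) (G x) (G y) := by rw [hs2, hs2]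
      have h5 : m d (f T) (G x) = G x := by
        simp only [G]; rw [hdist, hidM, hidR]
      rw [h4, hdist, h5]
      change m (G z) (G x) (G y) = _
      rw [hs2]
    rw [← h2, htwo]
    simp only [G]; rw [hdist, hidM, hidR]
  have bs1 : ∀ x y z : Fin r → Bool, bmed x y z = bmed y x z := by
    intro x y z; funext i; simp only [bmed]
    cases x i <;> cases y i <;> cases z i <;> rfl
  have bs2 : ∀ x y z : Fin r → Bool, bmed x y z = bmed y z x := by
    intro x y z; funext i; simp only [bmed]
    cases x i <;> cases y i <;> cases z i <;> rfl
  let g : (Fin r → Bool) → X := fun x => if x i0 = true then G x else f x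
  have g1 : ∀ x, x i0 = true → g x = G x := fun x hx => by simp [g, hx]
  have g0 : ∀ x, x i0 = false → g x = f (ρ x) := fun x hx => by rw [hρ x hx]; simp [g, hx]
  have hbi : ∀ x y z : Fin r → Bool, bmed x y z i0 =
    ((x i0 && y i0) || (y i0 && z i0) || (x i0 && z i0)) := fun _ _ _ => rfl
  have hgm : ∀ x y z, g (bmed x y z) = m (g x) (g y) (g z) := by
    intro x y z
    have hb := hbi x y z
    cases hx : x i0 <;> cases hy : y i0 <;> cases hz : z i0 <;>
      simp only [hx, hy, hz, Bool.and_true, Bool.and_false, Bool.or_true,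
        Bool.or_false] at hb
    · rw [g0 _ hx, g0 _ hy, g0 _ hz, g0 _ hb, ← hρb, hfmed]
    · rw [g0 _ hx, g0 _ hy, g1 _ hz, g0 _ hb, ← hρb, hone]
    · rw [g0 _ hx, g1 _ hy, g0 _ hz, g0 _ hb, ← hρb, ← hs2 (f (ρ z)), hone, ← bs2]
    · rw [g0 _ hx, g1 _ hy, g1 _ hz, g1 _ hb, hs2, htwo, bs2 x]
    · rw [g1 _ hx, g0 _ hy, g0 _ hz, g0 _ hb, ← hρb, hs2, hone, bs2 (ρ x)]
    · rw [g1 _ hx, g0 _ hy, g1 _ hz, g1 _ hb, ← hs2 (G z), htwo, bs2 z]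
    · rw [g1 _ hx, g1 _ hy, g0 _ hz, g1 _ hb, htwo]
    · rw [g1 _ hx, g1 _ hy, g1 _ hz, g1 _ hb, hthree]
  have hne : ∀ x y, G x ≠ f (ρ y) := fun x y h => hzero y (h ▸ (hG x).2)
  refine ⟨g, ?_, hgm, fun t ht => by rw [g0 t ht, hρ t ht], fun t ht => by
    rw [g1 t ht]; exact hG t⟩
  intro x y hxy
  cases hx : x i0 <;> cases hy : y i0
  · rw [g0 _ hx, g0 _ hy, hρ _ hx, hρ _ hy] at hxy
    exact hfinj hxy
  · rw [g0 _ hx, g1 _ hy] at hxy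
    exact absurd hxy.symm (hne _ _)
  · rw [g1 _ hx, g0 _ hy] at hxy
    exact absurd hxy (hne _ _)
  · rw [g1 _ hx, g1 _ hy] at hxy
    have h1 := hone x x y
    have h2 := hone y x y
    rw [hxy, h2] at h1
    rw [hfmed, hfmed, hidR, hidM] at h1
    have h3 := hfinj h1
    funext i
    by_cases hi : i = i0
    · rw [hi, hx, hy]
    · have := congrFun h3 i
      simpa [ρ, Function.update, hi] using this.symm
end

section
/- Let (X, μ) be a median algebra. Assume there exists a median embedding f : [0,1]ʳ → X, where [0,1]ʳ carries the coordinatewise median (each coordinate being the middle value of the three real numbers), such that the image by f of every edge of [0,1]ʳ is convex in X. Then the image of f is convex in X. -/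
/-- The median (middle value) of three real numbers. -/
noncomputable def rmed (a b c : ℝ) : ℝ := min (max a b) (min (max b c) (max a c))

/-- The coordinate median of three elements of `[0,1]`. -/
noncomputable def imed (a b c : unitInterval) : unitInterval :=
  ⟨rmed a.1 b.1 c.1, by
    constructor
    · simp only [rmed, le_min_iff, le_max_iff]
      exact ⟨Or.inl a.2.1, Or.inl b.2.1, Or.inl a.2.1⟩
    · exact min_le_of_left_le (max_le a.2.2 b.2.2)⟩

theorem imed_zero_left (t : unitInterval) : imed 0 t 1 = t := by
  have h0 := t.2.1
  have h1 := t.2.2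
  apply Subtype.ext
  simp [imed, rmed, h0, h1]

theorem imed_zero_mid (t : unitInterval) : imed t 0 1 = t := by
  have h0 := t.2.1
  have h1 := t.2.2
  apply Subtype.ext
  simp [imed, rmed, h0, h1]

theorem imed_zero_one (t : unitInterval) : imed 0 1 t = t := by
  have h0 := t.2.1
  have h1 := t.2.2
  apply Subtype.ext
  simp [imed, rmed, h0, h1]

/-- If a median embedding of `[0,1]ʳ` into a median algebra sends every edge of the cube
to a convex subset, then its image is convex. -/
theorem image_of_cube_convex {X : Type*} (m : X → X → X → X)
    (hmed : IsMedianAlgebra m) (r : ℕ)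
    (f : (Fin r → unitInterval) → X)
    (hfinj : Function.Injective f)
    (hfmed : ∀ x y z : Fin r → unitInterval,
      f (fun i => imed (x i) (y i) (z i)) = m (f x) (f y) (f z))
    (hedge : ∀ (i : Fin r) (v : Fin r → unitInterval), (∀ j, v j = 0 ∨ v j = 1) →
      MConvex m (f '' {t | ∀ j, j ≠ i → t j = v j})) :
    MConvex m (Set.range f) := by
  classical
  obtain ⟨h1, h2, h3, h4⟩ := hmed
  have key : ∀ c, m (f fun _ => 0) (f fun _ => 1) c = c → c ∈ Set.range f := by
    intro c hc
    have hci : ∀ i : Fin r, ∃ t : unitInterval,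
        f (fun j => if j = i then t else 0) =
          m (f fun _ => 0) (f fun j => if j = i then 1 else 0) c := by
      intro i
      have hmem := hedge i (fun _ => 0) (fun _ => Or.inl rfl)
        (f fun _ => 0) ⟨_, fun _ _ => rfl, rfl⟩
        (f fun j => if j = i then 1 else 0) ⟨_, fun j hj => if_neg hj, rfl⟩
        (show m (f fun _ => 0) (f fun j => if j = i then 1 else 0) c ∈ _ from ?_)
      · obtain ⟨t, ht, hft⟩ := hmem
        refine ⟨t i, ?_⟩
        rw [← hft]
        congr 1
        funext j
        by_cases hj : j = i
        · simp [hj]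
        · simp [hj, ht j hj]
      · generalize f (fun _ => 0) = a
        generalize f (fun j => if j = i then 1 else 0) = b
        show m a b (m a b c) = m a b c
        have e1 : m a b a = a := by rw [← h2 a a b, h3]
        have e2 : m a b b = b := by rw [h2 a b b, h3]
        rw [h4, e1, e2]
    choose t ht using hci
    have hS : ∀ S : Finset (Fin r),
        m (f fun _ => 0) c (f fun j => if j ∈ S then 1 else 0) =
          f (fun j => if j ∈ S then t j else 0) := by
      intro S
      induction S using Finset.induction_on with
      | empty =>
        simp only [Finset.notMem_empty, if_false]
        rw [← h2, h3]
      | insert i S hi ih =>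
        have e1 : (fun j => if j ∈ insert i S then (1 : unitInterval) else 0) =
            fun j => imed (if j ∈ S then 1 else 0) (if j = i then 1 else 0) 1 := by
          funext j
          by_cases hj : j = i
          · subst hj; simp [hi, imed_zero_left]
          · simp [hj, imed_zero_mid]
        have e2 : (fun j => if j ∈ insert i S then t j else 0) =
            fun j => imed (if j ∈ S then t j else 0) (if j = i then t i else 0) 1 := by
          funext j
          by_cases hj : j = i
          · subst hj; simp [hi, imed_zero_left]
          · simp [hj, imed_zero_mid]
        rw [e1, e2, hfmed, hfmed, h4, ih, ht i]
        congr 1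
        rw [h1, h2 c, h1]
    refine ⟨fun j => t j, ?_⟩
    have := hS Finset.univ
    simp only [Finset.mem_univ, if_true] at this
    rw [← this, h1, h2, hc]
  rintro _ ⟨x, rfl⟩ _ ⟨y, rfl⟩ c hc
  apply key
  have hc' : m (f x) (f y) c = c := hc
  have hx : ∀ x, m (f fun _ => 0) (f fun _ => 1) (f x) = f x := by
    intro x
    rw [← hfmed]
    simp only [imed_zero_one]
  rw [← hc', h4, hx, hx]
end

section
/- Let (X, μ) be a median algebra and let f : [0,1]ʳ → X be a median embedding (where [0,1]ʳ carries the coordinatewise median) such that the image by f of every edge of [0,1]ʳ is convex in X. Then the image of f equals the interval I(f(0,…,0), f(1,…,1)) = {c ∈ X | μ(f(0,…,0), f(1,…,1), c) = c}. -/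
theorem imed_aux1 (x : unitInterval) : imed 0 1 x = x := by
  have h0 := x.2.1
  have h1 := x.2.2
  apply Subtype.ext
  simp [imed, rmed, h0, h1]

theorem imed_aux2 : imed 0 0 1 = 0 ∧ imed 0 1 1 = 1 ∧ imed 1 0 1 = 1 ∧ imed 1 1 1 = 1 := by
  refine ⟨?_, ?_, ?_, ?_⟩ <;> apply Subtype.ext <;> simp [imed, rmed]

/-- If a median embedding of `[0,1]ʳ` into a median algebra sends every edge of the cube
to a convex subset, then its image is the interval between the images of the corners. -/
theorem image_of_cube_eq_interval {X : Type*} (m : X → X → X → X)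
    (hmed : IsMedianAlgebra m) (r : ℕ)
    (f : (Fin r → unitInterval) → X)
    (hfinj : Function.Injective f)
    (hfmed : ∀ x y z : Fin r → unitInterval,
      f (fun i => imed (x i) (y i) (z i)) = m (f x) (f y) (f z))
    (hedge : ∀ (i : Fin r) (v : Fin r → unitInterval), (∀ j, v j = 0 ∨ v j = 1) →
      MConvex m (f '' {t | ∀ j, j ≠ i → t j = v j})) :
    Set.range f = mInterval m (f fun _ => 0) (f fun _ => 1) := by
  classical
  obtain ⟨h1, h2, h3, h4⟩ := hmed
  have hidem : ∀ a b c, m a b (m a b c) = m a b c := by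
    intro a b c
    have e1 : m a b a = a := by rw [← h2, h3]
    have e2 : m a b b = b := by rw [h2, h3]
    rw [h4, e1, e2]
  have key : ∀ (c : X) (S : Finset (Fin r)),
      m (f fun _ => 0) c (f fun j => if j ∈ S then 1 else 0) ∈ Set.range f := by
    intro c S
    induction S using Finset.induction_on with
    | empty =>
      refine ⟨fun _ => 0, ?_⟩
      simp only [Finset.notMem_empty, if_false]
      rw [← h2, h3]
    | insert i S hi ih =>
      have he : m (f fun _ => 0) c (f fun j => if j = i then 1 else 0) ∈ Set.range f := by
        have hc := hedge i (fun _ => 0) (fun _ => Or.inl rfl) (f fun _ => 0)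
          ⟨_, fun _ _ => rfl, rfl⟩ (f fun j => if j = i then 1 else 0)
          ⟨_, fun j hj => if_neg hj, rfl⟩
        have hm : m (f fun _ => 0) (f fun j => if j = i then 1 else 0) c ∈
            mInterval m (f fun _ => 0) (f fun j => if j = i then 1 else 0) := hidem _ _ _
        obtain ⟨t, -, ht⟩ := hc hm
        refine ⟨t, ?_⟩
        rw [ht, h2, h2, h1]
      obtain ⟨s, hs⟩ := ih
      obtain ⟨t, ht⟩ := he
      have hj : (fun j => if j ∈ insert i S then (1 : unitInterval) else 0) =
          fun j => imed (if j ∈ S then 1 else 0) (if j = i then 1 else 0) 1 := by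
        obtain ⟨a, b, c, d⟩ := imed_aux2
        funext j
        rcases eq_or_ne j i with rfl | hji
        · simp [hi, b]
        · by_cases hS : j ∈ S <;> simp [hS, hji, a, c]
      refine ⟨fun j => imed (s j) (t j) 1, ?_⟩
      rw [hj, hfmed _ _ (fun _ => 1), hfmed _ _ (fun _ => 1), h4, hs, ht]
  ext c
  constructor
  · rintro ⟨x, rfl⟩
    change m _ _ _ = _
    rw [← hfmed]
    simp only [imed_aux1]
  · intro hc
    have hc' : m (f fun _ => 0) (f fun _ => 1) c = c := hc
    have := key c Finset.univ
    simp only [Finset.mem_univ, if_true] at this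
    rw [h2, h2, h1, hc'] at this
    exact this
end

section
/- Let X and Y be Hausdorff topological spaces and let f : X → Y be a continuous injective map. Then the separation dimension of X is at most the separation dimension of Y. -/
universe u

/-- `SepDimLE n X` means the separation dimension of `X` is at most `n - 1`
(so `SepDimLE 0 X` means `X = ∅`, i.e. dimension `≤ -1`). -/
def SepDimLE : (n : ℕ) → (X : Type u) → [TopologicalSpace X] → Prop
  | 0, X, _ => IsEmpty X
  | n+1, X, _ => ∀ x y : X, x ≠ y → ∃ A B : Set X, IsClosed A ∧ IsClosed B ∧
      x ∉ B ∧ y ∉ A ∧ A ∪ B = Set.univ ∧ SepDimLE n ↥(A ∩ B)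

universe v

/-- A continuous injection between Hausdorff spaces does not increase the
separation dimension. -/
theorem sepDim_le_of_continuous_injective {X : Type u} {Y : Type v}
    [TopologicalSpace X] [TopologicalSpace Y] [T2Space X] [T2Space Y]
    (f : X → Y) (hcont : Continuous f) (hinj : Function.Injective f) :
    ∀ n : ℕ, SepDimLE n Y → SepDimLE n X := by
  intro n
  induction n generalizing X Y with
  | zero =>
    intro h
    simp only [SepDimLE] at h ⊢
    exact ⟨fun x => h.false (f x)⟩
  | succ n ih =>
    intro h
    simp only [SepDimLE] at h ⊢
    intro x y hxy
    obtain ⟨A, B, hA, hB, hx, hy, hU, hd⟩ := h (f x) (f y) (hinj.ne hxy)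
    refine ⟨f ⁻¹' A, f ⁻¹' B, hA.preimage hcont, hB.preimage hcont, hx, hy, ?_, ?_⟩
    · rw [← Set.preimage_union, hU, Set.preimage_univ]
    · refine ih (X := ↥(f ⁻¹' A ∩ f ⁻¹' B)) (Y := ↥(A ∩ B))
        (fun z => ⟨f z.1, z.2⟩) ?_ ?_ hd
      · exact (hcont.comp continuous_subtype_val).subtype_mk _
      · intro a b hab
        exact Subtype.ext (hinj (congrArg Subtype.val hab))
end

section
/- Let X be a connected metric space with a Lipschitz, locally convex median of rank r (i.e. every median embedding of an n-cube {0,1}ⁿ into X satisfies n ≤ r, and some median embedding of {0,1}ʳ into X exists). Then the separation dimension of X equals r. -/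
universe u

namespace MedRank

/-- Boolean majority. -/
def maj (x y z : Bool) : Bool := (x && y) || (y && z) || (x && z)

/-- `φ` is a median homomorphism to `Bool`. -/
def MHom {X : Type*} (m : X → X → X → X) (φ : X → Bool) : Prop :=
  ∀ a b c, φ (m a b c) = maj (φ a) (φ b) (φ c)

section alg
variable {X : Type*} {m : X → X → X → X}

lemma c12 (h : IsMedianAlgebra m) (a b c : X) : m a b c = m b a c := h.1 a b c
lemma crot (h : IsMedianAlgebra m) (a b c : X) : m a b c = m b c a := h.2.1 a b c
lemma c23 (h : IsMedianAlgebra m) (a b c : X) : m a b c = m a c b := by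
  rw [crot h a b c, c12 h b c a, crot h c b a, c12 h b a c, crot h a b c, c12 h, crot h, crot h]
lemma maa (h : IsMedianAlgebra m) (a b : X) : m a a b = a := h.2.2.1 a b
lemma aba (h : IsMedianAlgebra m) (a b : X) : m a b a = a := by rw [c23 h, maa h]
lemma baa (h : IsMedianAlgebra m) (a b : X) : m b a a = a := by rw [crot h, maa h]
lemma dst (h : IsMedianAlgebra m) (a b c d e : X) :
    m a b (m c d e) = m (m a b c) (m a b d) e := h.2.2.2 a b c d e
lemma idem (h : IsMedianAlgebra m) (a b c : X) : m a b (m a b c) = m a b c := by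
  rw [dst h, aba h, baa h]
lemma dst3 (h : IsMedianAlgebra m) (a b c d e : X) :
    m a b (m c d e) = m (m a b c) (m a b d) (m a b e) := by
  rw [← idem h, dst h a b c d e, crot h (m a b c) _ e, crot h (m a b d) e _, dst h, idem h,
    crot h, crot h]

lemma assoc' (h : IsMedianAlgebra m) (x a b c : X) : m x (m x a b) c = m x a (m x b c) := by
  rw [dst h, aba h]

lemma absorb (h : IsMedianAlgebra m) {x y a : X} (b : X) (ha : m x y a = a) :
    m y a (m x a b) = a := by
  rw [dst h, baa h, c23 h y a x, c12 h y x a, ha, maa h]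

lemma abs1 (h : IsMedianAlgebra m) (y a b : X) : m y (m y a b) a = m y a b := by
  rw [c23 h, idem h]
lemma abs2 (h : IsMedianAlgebra m) (y a b : X) : m y (m y a b) b = m y a b := by
  rw [c23 h y a b, abs1 h]

/-- Point separation by median homomorphisms to `Bool`. -/
theorem sep_points (h : IsMedianAlgebra m) {x y : X} (hxy : x ≠ y) :
    ∃ φ : X → Bool, MHom m φ ∧ φ x = false ∧ φ y = true := by
  classical
  let I := {a : X // m x y a = a}
  have hyx : ∀ a : I, m y x a.1 = a.1 := fun a => by rw [c12 h]; exact a.2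
  let : Min I := ⟨fun a b => ⟨m x a.1 b.1, by rw [dst h, aba h, a.2]⟩⟩
  let : Max I := ⟨fun a b => ⟨m y a.1 b.1, by rw [dst h, baa h, a.2]⟩⟩
  have vinf : ∀ a b : I, (a ⊓ b).1 = m x a.1 b.1 := fun a b => rfl
  have vsup : ∀ a b : I, (a ⊔ b).1 = m y a.1 b.1 := fun a b => rfl
  let LL : Lattice I := Lattice.mk'
    (fun a b => Subtype.ext (by rw [vsup, vsup, c23 h]))
    (fun a b c => Subtype.ext (by simp only [vsup]; rw [assoc' h]))
    (fun a b => Subtype.ext (by rw [vinf, vinf, c23 h]))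
    (fun a b c => Subtype.ext (by simp only [vinf]; rw [assoc' h]))
    (fun a b => Subtype.ext (by simp only [vsup, vinf]; exact absorb h _ a.2))
    (fun a b => Subtype.ext (by simp only [vsup, vinf]; exact absorb h _ (hyx a)))
  have vinf : ∀ a b : I, (a ⊓ b).1 = m x a.1 b.1 := fun a b => rfl
  have vsup : ∀ a b : I, (a ⊔ b).1 = m y a.1 b.1 := fun a b => rfl
  let DL : DistribLattice I := { LL with
    le_sup_inf := fun a b c => by
      apply le_of_eq
      apply Subtype.ext
      simp only [vsup, vinf]
      have e : m y a.1 (m x (m y a.1 b.1) (m y a.1 c.1)) = m x (m y a.1 b.1) (m y a.1 c.1) := by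
        rw [crot h x, dst h, idem h, idem h]
      rw [← e, dst3 h y a.1 x, dst3 h y a.1 x, idem h, idem h] }
  let bx : I := ⟨x, aba h x y⟩
  let ty : I := ⟨y, baa h y x⟩
  have hbx : ∀ a : I, bx ≤ a := fun a => by
    rw [← inf_eq_left]; apply Subtype.ext; rw [vinf]; exact maa h _ _
  have hle : ¬ ty ≤ bx := by
    intro hh
    have : ty = bx := le_antisymm hh (hbx ty)
    exact hxy (congrArg Subtype.val this).symm
  have hdis : Disjoint ((Order.PFilter.principal ty : Order.PFilter I) : Set I)
      ((Order.Ideal.principal bx : Order.Ideal I) : Set I) := by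
    rw [Set.disjoint_left]
    intro a ha hb
    have h1 : ty ≤ a := Order.PFilter.mem_principal.1 ha
    have h2 : a ≤ bx := Order.Ideal.mem_principal.1 hb
    exact hle (h1.trans h2)
  obtain ⟨J, hJ, hJ1, hJ2⟩ := DistribLattice.prime_ideal_of_disjoint_filter_ideal hdis
  have hbJ : bx ∈ J := hJ1 (Order.Ideal.mem_principal.2 le_rfl)
  have htJ : ty ∉ J := fun hh => Set.disjoint_left.1 hJ2
    (Order.PFilter.mem_principal.2 le_rfl) hh
  have k1 : ∀ A B D : I, ∀ c, D.1 = m A.1 B.1 c → A ∈ J → B ∈ J → D ∈ J := by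
    intro A B D c hD hA hB
    refine J.lower ?_ (Order.Ideal.sup_mem hA hB)
    rw [← sup_eq_left]
    apply Subtype.ext
    rw [vsup, hD, dst h, vsup, abs1 h, abs2 h, maa h]
  have k2 : ∀ A B D : I, ∀ c, D.1 = m A.1 B.1 c → A ∉ J → B ∉ J → D ∉ J := by
    intro A B D c hD hA hB hDJ
    have : A ⊓ B ≤ D := by
      rw [← inf_eq_left]
      apply Subtype.ext
      rw [vinf, hD, dst h, vinf, abs1 h, abs2 h, maa h]
    rcases hJ.mem_or_mem (J.lower this hDJ) with h1 | h1
    · exact hA h1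
    · exact hB h1
  let pr : X → I := fun u => ⟨m x y u, idem h x y u⟩
  have hpr : ∀ a b c, (pr (m a b c)).1 = m (pr a).1 (pr b).1 (pr c).1 := fun a b c => dst3 h _ _ _ _ _
  refine ⟨fun u => decide (pr u ∉ J), ?_, ?_, ?_⟩
  · intro a b c
    have e1 := hpr a b c
    have e2 := e1.trans (crot h _ _ _)
    have e3 := e1.trans (c23 h _ _ _)
    have a1 := k1 _ _ _ _ e1
    have a2 := k1 _ _ _ _ e2
    have a3 := k1 _ _ _ _ e3
    have b1 := k2 _ _ _ _ e1
    have b2 := k2 _ _ _ _ e2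
    have b3 := k2 _ _ _ _ e3
    by_cases ha : pr a ∈ J <;> by_cases hb : pr b ∈ J <;> by_cases hc : pr c ∈ J <;>
      by_cases hd : pr (m a b c) ∈ J <;> simp_all [maj]
  · have : pr x = bx := Subtype.ext (aba h x y)
    simp [this, hbJ]
  · have : pr y = ty := Subtype.ext (baa h y x)
    simp [this, htJ]

/-- Identities may be checked after applying all homomorphisms to `Bool`. -/
theorem hom_ext (h : IsMedianAlgebra m) {s t : X} (hst : ∀ φ, MHom m φ → φ s = φ t) : s = t := by
  by_contra hne
  obtain ⟨φ, hφ, h1, h2⟩ := sep_points h hne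
  have := hst φ hφ
  simp_all

lemma med_mem_interval (h : IsMedianAlgebra m) (a b c : X) : m a b c ∈ mInterval m a b :=
  idem h a b c

/-- Disjoint convex sets are separated by a homomorphism to `Bool`. -/
theorem kakutani (h : IsMedianAlgebra m) {V U : Set X} (hV : MConvex m V) (hU : MConvex m U)
    (hVne : V.Nonempty) (hUne : U.Nonempty) (hd : Disjoint V U) :
    ∃ φ : X → Bool, MHom m φ ∧ (∀ x ∈ V, φ x = false) ∧ (∀ x ∈ U, φ x = true) := by
  classical
  -- maximal convex extensions
  have ext : ∀ V U : Set X, MConvex m V → V.Nonempty → Disjoint V U →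
      ∃ C : Set X, V ⊆ C ∧ MConvex m C ∧ Disjoint C U ∧
        ∀ C', MConvex m C' → C ⊆ C' → Disjoint C' U → C' ⊆ C := by
    intro V U hV _ hd
    obtain ⟨C, hVC, hC⟩ := zorn_subset_nonempty {C : Set X | MConvex m C ∧ Disjoint C U} (by
      intro c hc hch hne
      refine ⟨⋃₀ c, ⟨?_, ?_⟩, fun s hs => Set.subset_sUnion_of_mem hs⟩
      · rintro a ⟨s, hs, has⟩ b ⟨t, ht, hbt⟩ p hp
        rcases hch.total hs ht with hst | hst
        · exact ⟨t, ht, (hc ht).1 a (hst has) b hbt hp⟩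
        · exact ⟨s, hs, (hc hs).1 a has b (hst hbt) hp⟩
      · rw [Set.disjoint_sUnion_left]
        exact fun s hs => (hc hs).2) V ⟨hV, hd⟩
    exact ⟨C, hVC, hC.prop.1, hC.prop.2, fun C' h1 h2 h3 => hC.le_of_ge ⟨h1, h3⟩ h2⟩
  obtain ⟨C, hVC, hC, hCU, hCmax⟩ := ext V U hV hVne hd
  obtain ⟨D, hUD, hD, hDC, hDmax⟩ := ext U C hU hUne hCU.symm
  have join : ∀ C : Set X, C.Nonempty → MConvex m C → ∀ z,
      MConvex m {p | ∃ c ∈ C, m z c p = p} := by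
    rintro C _ hC z p ⟨c, hc, hp⟩ q ⟨c', hc', hq⟩ w hw
    refine ⟨m c c' w, hC c hc c' hc' (med_mem_interval h _ _ _), ?_⟩
    apply hom_ext h
    intro φ hφ
    have hw : m p q w = w := hw
    have e1 := congrArg φ hp
    have e2 := congrArg φ hq
    have e3 := congrArg φ hw
    simp only [hφ _ _ _] at e1 e2 e3 ⊢
    revert e1 e2 e3
    generalize φ z = z; generalize φ c = c; generalize φ c' = c'; generalize φ p = p
    generalize φ q = q; generalize φ w = w
    revert z c c' p q w
    decide
  have cov : ∀ z, z ∈ C ∨ z ∈ D := by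
    intro z
    by_contra hz
    push Not at hz
    have hCne : C.Nonempty := hVne.mono hVC
    have hDne : D.Nonempty := hUne.mono hUD
    have s1 : ∃ d ∈ D, ∃ c ∈ C, m z c d = d := by
      by_contra hcon
      push Not at hcon
      refine hz.1 (hCmax _ (join C hCne hC z) ?_ ?_ ?_)
      · intro c hc; exact ⟨c, hc, baa h _ _⟩
      · rw [Set.disjoint_left]
        rintro p ⟨c, hc, hp⟩ hpU
        exact hcon p (hUD hpU) c hc hp
      · obtain ⟨c, hc⟩ := hCne
        exact ⟨c, hc, aba h _ _⟩
    have s2 : ∃ c ∈ C, ∃ d ∈ D, m z d c = c := by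
      by_contra hcon
      push Not at hcon
      refine hz.2 (hDmax _ (join D hDne hD z) ?_ ?_ ?_)
      · intro c hc; exact ⟨c, hc, baa h _ _⟩
      · rw [Set.disjoint_left]
        rintro p ⟨c, hc, hp⟩ hpU
        exact hcon p hpU c hc hp
      · obtain ⟨c, hc⟩ := hDne
        exact ⟨c, hc, aba h _ _⟩
    obtain ⟨d, hd, c, hc, e1⟩ := s1
    obtain ⟨c', hc', d', hd', e2⟩ := s2
    have q1 : m c c' d ∈ C := hC c hc c' hc' (med_mem_interval h _ _ _)
    have q2 : m c c' d ∈ D := by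
      refine hD d hd d' hd' ?_
      change m d d' (m c c' d) = m c c' d
      apply hom_ext h
      intro φ hφ
      have e1 := congrArg φ e1
      have e2 := congrArg φ e2
      simp only [hφ _ _ _] at e1 e2 ⊢
      revert e1 e2
      generalize φ z = z; generalize φ c = c; generalize φ c' = c'; generalize φ d = p
      generalize φ d' = q
      revert z c c' p q
      decide
    exact Set.disjoint_left.1 hDC q2 q1
  refine ⟨fun x => decide (x ∈ D), ?_, ?_, ?_⟩
  · intro a b c
    have hCD : ∀ x, x ∈ C ↔ x ∉ D := fun x =>
      ⟨fun h1 h2 => Set.disjoint_left.1 hDC h2 h1, fun h1 => (cov x).resolve_right h1⟩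
    have i1 := med_mem_interval h a b c
    have i2 : m a b c ∈ mInterval m b c := by rw [crot h]; exact med_mem_interval h _ _ _
    have i3 : m a b c ∈ mInterval m a c := by rw [c23 h]; exact med_mem_interval h _ _ _
    have a1 := fun h1 h2 => hC a h1 b h2 i1
    have a2 := fun h1 h2 => hC b h1 c h2 i2
    have a3 := fun h1 h2 => hC a h1 c h2 i3
    have b1 := fun h1 h2 => hD a h1 b h2 i1
    have b2 := fun h1 h2 => hD b h1 c h2 i2
    have b3 := fun h1 h2 => hD a h1 c h2 i3
    simp only [hCD] at a1 a2 a3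
    clear i1 i2 i3 hCD
    by_cases ha : a ∈ D <;> by_cases hb : b ∈ D <;> by_cases hc : c ∈ D <;>
      by_cases hd : m a b c ∈ D <;> simp_all [maj]
  · intro x hx
    have : x ∉ D := fun h2 => Set.disjoint_left.1 hDC h2 (hVC hx)
    simpa using this
  · intro x hx
    simpa using hUD hx
end alg
end MedRank

namespace MedRank
section cube
variable {X : Type*} {m : X → X → X → X}

/-- A map from the cube commuting with medians. -/
def CHom {n : ℕ} (m : X → X → X → X) (f : (Fin n → Bool) → X) : Prop :=
  ∀ x y z, f (bmed x y z) = m (f x) (f y) (f z)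

/-- Gate map to the hull of a finite list. -/
def gate (m : X → X → X → X) (a : X) : List X → X → X
  | [], _ => a
  | b :: l, x => m x b (gate m a l x)

lemma gate_spec {φ : X → Bool} (hφ : MHom m φ) (a : X) (l : List X) :
    (∃ c, (∀ y ∈ a :: l, φ y = c) ∧ ∀ x, φ (gate m a l x) = c) ∨
    ((∃ y ∈ a :: l, ∃ y' ∈ a :: l, φ y ≠ φ y') ∧ ∀ x, φ (gate m a l x) = φ x) := by
  induction l with
  | nil => left; exact ⟨φ a, by simp, fun x => rfl⟩
  | cons b l ih =>
    rcases ih with ⟨c, h1, h2⟩ | ⟨⟨y, hy, y', hy', hne⟩, h2⟩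
    · by_cases hb : φ b = c
      · left
        refine ⟨c, ?_, ?_⟩
        · intro y hy
          simp only [List.mem_cons] at hy
          rcases hy with rfl | rfl | hy
          · exact h1 _ (by simp)
          · exact hb
          · exact h1 _ (by simp [hy])
        · intro x
          simp only [gate, hφ _ _ _, h2, hb]
          generalize φ x = u; cases u <;> cases c <;> rfl
      · right
        refine ⟨⟨a, by simp, b, by simp, ?_⟩, ?_⟩
        · rw [h1 a (by simp)]; exact fun h => hb h.symm
        · intro x
          simp only [gate, hφ _ _ _, h2]
          revert hb
          generalize φ x = u; generalize φ b = b; clear h1 h2; revert u b c; decide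
    · right
      refine ⟨⟨y, ?_, y', ?_, hne⟩, ?_⟩
      · simp only [List.mem_cons] at hy ⊢; tauto
      · simp only [List.mem_cons] at hy' ⊢; tauto
      · intro x
        simp only [gate, hφ _ _ _, h2]
        generalize φ x = u; generalize φ b = b; revert u b; decide

theorem cube_of_homs (h : IsMedianAlgebra m) (n : ℕ) : ∀ (θ : Fin n → X → Bool)
    (_ : ∀ i, MHom m (θ i)) (p : (Fin n → Bool) → X) (_ : ∀ v i, θ i (p v) = v i),
    ∃ f : (Fin n → Bool) → X, CHom m f ∧ ∀ v i, θ i (f v) = v i := by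
  induction n with
  | zero =>
    intro θ _ p _
    exact ⟨fun _ => p default, fun x y z => (maa h _ _).symm, fun v i => i.elim0⟩
  | succ n ih =>
    intro θ hθ p hp
    obtain ⟨f', hf', hf2⟩ := ih (fun i => θ i.succ) (fun i => hθ _)
      (fun v => p (Fin.cons false v)) (fun v i => by rw [hp]; simp)
    let G : Bool → X → X := fun b => gate m (p (Fin.cons b fun _ => false))
      ((Finset.univ : Finset (Fin n → Bool)).toList.map fun v => p (Fin.cons b v))
    have hG : ∀ b φ, MHom m φ → (∃ c, (∀ v, φ (p (Fin.cons b v)) = c) ∧ ∀ x, φ (G b x) = c) ∨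
      ((∃ v v', φ (p (Fin.cons b v)) ≠ φ (p (Fin.cons b v'))) ∧ ∀ x, φ (G b x) = φ x) := by
      intro b φ hφ
      rcases gate_spec hφ (p (Fin.cons b fun _ => false))
        ((Finset.univ : Finset (Fin n → Bool)).toList.map fun v => p (Fin.cons b v)) with
        ⟨c, h1, h2⟩ | ⟨⟨y, hy, y', hy', hne⟩, h2⟩
      · left
        exact ⟨c, fun v => h1 _ (by simp), h2⟩
      · right
        refine ⟨?_, h2⟩
        have : ∀ y ∈ p (Fin.cons b fun _ => false) ::
          ((Finset.univ : Finset (Fin n → Bool)).toList.map fun v => p (Fin.cons b v)),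
          ∃ v : Fin n → Bool, y = p (Fin.cons b v) := by
          intro y hy
          simp only [List.mem_cons, List.mem_map] at hy
          rcases hy with rfl | ⟨v, -, rfl⟩
          · exact ⟨_, rfl⟩
          · exact ⟨_, rfl⟩
        obtain ⟨v, rfl⟩ := this y hy
        obtain ⟨v', rfl⟩ := this y' hy'
        exact ⟨v, v', hne⟩
    let f : (Fin (n+1) → Bool) → X := fun w =>
      if w 0 then G true (G false (G true (f' (Fin.tail w)))) else G false (G true (f' (Fin.tail w)))
    have ff : ∀ (φ : X → Bool) (w : Fin (n+1) → Bool), φ (f w) = if w 0 then φ (G true (G false (G true (f' (Fin.tail w)))))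
        else φ (G false (G true (f' (Fin.tail w)))) := by
      intro φ w; simp only [f]; split_ifs <;> rfl
    refine ⟨f, ?_, ?_⟩
    · intro x y z
      apply hom_ext h
      intro φ hφ
      rw [hφ]
      have b0 : bmed x y z 0 = maj (x 0) (y 0) (z 0) := rfl
      have bt : Fin.tail (bmed x y z) = bmed (Fin.tail x) (Fin.tail y) (Fin.tail z) := rfl
      rcases hG false φ hφ with ⟨c0, -, h0⟩ | ⟨-, h0⟩ <;>
        rcases hG true φ hφ with ⟨c1, -, h1⟩ | ⟨-, h1⟩
      · simp only [ff φ, h0, h1, b0]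
        generalize x 0 = x; generalize y 0 = y; generalize z 0 = z
        clear h0 h1; revert x y z c0 c1; decide
      · simp only [ff φ, h0, h1, b0, ite_self]
        cases c0 <;> rfl
      · simp only [ff φ, h0, h1, b0, ite_self]
        cases c1 <;> rfl
      · simp only [ff φ, h0, h1, bt, hf' _ _ _, hφ _ _ _, ite_self]
    · intro v i
      refine Fin.cases ?_ (fun i => ?_) i
      · have k0 : ∀ x, θ 0 (G false x) = false := by
          rcases hG false _ (hθ 0) with ⟨c, h1, h2⟩ | ⟨⟨v, v', hne⟩, -⟩
          · have := h1 (fun _ => false)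
            rw [hp] at this
            intro x; rw [h2, ← this]; rfl
          · simp [hp] at hne
        have k1 : ∀ x, θ 0 (G true x) = true := by
          rcases hG true _ (hθ 0) with ⟨c, h1, h2⟩ | ⟨⟨v, v', hne⟩, -⟩
          · have := h1 (fun _ => false)
            rw [hp] at this
            intro x; rw [h2, ← this]; rfl
          · simp [hp] at hne
        rw [ff (θ 0), k0, k1]
        cases v 0 <;> rfl
      · have k : ∀ b x, θ i.succ (G b x) = θ i.succ x := by
          intro b
          rcases hG b _ (hθ i.succ) with ⟨c, h1, h2⟩ | ⟨-, h2⟩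
          · have e1 := h1 (fun _ => false)
            have e2 := h1 (fun _ => true)
            rw [hp] at e1 e2
            simp only [Fin.cons_succ] at e1 e2
            rw [← e1] at e2; cases e2
          · exact h2
        rw [ff (θ i.succ)]
        simp only [k]
        rw [ite_self, hf2]; rfl

lemma cube_inj_of_homs {n : ℕ} {θ : Fin n → X → Bool} {f : (Fin n → Bool) → X}
    (hf : ∀ v i, θ i (f v) = v i) : Function.Injective f := by
  intro v w hvw
  ext i
  rw [← hf v i, hvw, hf]

/-- The basis vertex. -/
def ev {n : ℕ} (i : Fin n) : Fin n → Bool := Function.update (fun _ => false) i true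

lemma bmed_ev {n : ℕ} (i : Fin n) (v : Fin n → Bool) :
    bmed (fun _ => false) (ev i) v = if v i then ev i else fun _ => false := by
  ext j
  by_cases hj : j = i
  · subst hj; by_cases hv : v j <;> simp [bmed, ev, hv]
  · by_cases hv : v i <;> simp [bmed, ev, hv, hj]

lemma ev_ne {n : ℕ} (i : Fin n) : (fun _ => false) ≠ ev i := by
  intro h
  have := congrFun h i
  simp [ev] at this

lemma hom_cube {n : ℕ} {f : (Fin n → Bool) → X} (hf : CHom m f) {φ : X → Bool} (hφ : MHom m φ)
    (i : Fin n) (h0 : φ (f fun _ => false) = false) (h1 : φ (f (ev i)) = true)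
    (v : Fin n → Bool) : φ (f v) = v i := by
  have e := congrArg φ (hf (fun _ => false) (ev i) v)
  rw [bmed_ev, hφ, h0, h1] at e
  by_cases hv : v i
  · simp only [hv, if_true, h1] at e ⊢
    revert e; generalize φ (f v) = u; revert u; decide
  · simp only [hv] at e ⊢
    simp only [Bool.false_eq_true, if_false, h0] at e
    revert e; generalize φ (f v) = u; revert u; decide
end cube

theorem upper (n : ℕ) : ∀ (Y : Type u) [TopologicalSpace Y] [T2Space Y] (m : Y → Y → Y → Y)
    (_ : IsMedianAlgebra m) (_ : Continuous fun p : Y × Y × Y => m p.1 p.2.1 p.2.2)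
    (_ : ∀ x : Y, ∀ U ∈ nhds x, ∃ V ∈ nhds x, V ⊆ U ∧ MConvex m V)
    (_ : ∀ N : ℕ, ∀ f : (Fin N → Bool) → Y, Function.Injective f → CHom m f → N < n),
    SepDimLE n Y := by
  induction n with
  | zero =>
    intro Y _ _ m hm hc hlc hr
    refine ⟨fun y => ?_⟩
    exact absurd (hr 0 (fun _ => y) (fun _ _ _ => Subsingleton.elim _ _)
      (fun _ _ _ => (maa hm _ _).symm)) (by simp)
  | succ n ih =>
    intro Y _ _ m hm hc hlc hr
    -- separation by homs with neighbourhoods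
    have sepn : ∀ x y : Y, x ≠ y → ∃ φ : Y → Bool, MHom m φ ∧
        (∀ᶠ z in nhds x, φ z = false) ∧ (∀ᶠ z in nhds y, φ z = true) := by
      intro x y hxy
      obtain ⟨u, v, hu, hv, hxu, hyv, huv⟩ := t2_separation hxy
      obtain ⟨V, hV, hVu, hVc⟩ := hlc x u (hu.mem_nhds hxu)
      obtain ⟨U, hU, hUv, hUc⟩ := hlc y v (hv.mem_nhds hyv)
      obtain ⟨φ, hφ, h1, h2⟩ := kakutani hm hVc hUc ⟨x, mem_of_mem_nhds hV⟩
        ⟨y, mem_of_mem_nhds hU⟩ (huv.mono hVu hUv)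
      exact ⟨φ, hφ, Filter.mem_of_superset hV h1, Filter.mem_of_superset hU h2⟩
    intro x y hxy
    obtain ⟨φ, hφ, hx, hy⟩ := sepn x y hxy
    let A := closure {z | φ z = false}
    let B := closure {z | φ z = true}
    have hAm : ∀ b : Bool, ∀ p ∈ closure {z | φ z = b}, ∀ q ∈ closure {z | φ z = b}, ∀ t,
        m p q t ∈ closure {z | φ z = b} := by
      intro b p hp q hq t
      have hc2 : Continuous fun s : Y × Y => m s.1 s.2 t :=
        hc.comp (continuous_fst.prodMk (continuous_snd.prodMk continuous_const))
      refine map_mem_closure₂ (f := fun a b => m a b t) hc2 hp hq ?_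
      intro a ha c hcc
      change φ _ = b
      have ha : φ a = b := ha
      have hcc : φ c = b := hcc
      rw [hφ, ha, hcc]
      generalize φ t = u; cases u <;> cases b <;> rfl
    have hmem : ∀ p ∈ A ∩ B, ∀ q ∈ A ∩ B, ∀ t, m p q t ∈ A ∩ B := fun p hp q hq t =>
      ⟨hAm _ p hp.1 q hq.1 t, hAm _ p hp.2 q hq.2 t⟩
    refine ⟨A, B, isClosed_closure, isClosed_closure, ?_, ?_, ?_, ?_⟩
    · intro hxB
      have := mem_closure_iff_frequently.1 hxB
      obtain ⟨z, hz1, hz2⟩ := (this.and_eventually hx).exists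
      have hz1 : φ z = true := hz1
      simp [hz1] at hz2
    · intro hyA
      have := mem_closure_iff_frequently.1 hyA
      obtain ⟨z, hz1, hz2⟩ := (this.and_eventually hy).exists
      have hz1 : φ z = false := hz1
      simp [hz1] at hz2
    · ext z
      simp only [Set.mem_union, Set.mem_univ, iff_true]
      cases hz : φ z
      · left; exact subset_closure hz
      · right; exact subset_closure hz
    · let m' : ↥(A ∩ B) → ↥(A ∩ B) → ↥(A ∩ B) → ↥(A ∩ B) := fun p q t =>
        ⟨m p.1 q.1 t.1, hmem _ p.2 _ q.2 _⟩
      refine ih _ m' ?_ ?_ ?_ ?_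
      · exact ⟨fun a b c => Subtype.ext (hm.1 _ _ _), fun a b c => Subtype.ext (hm.2.1 _ _ _),
          fun a b => Subtype.ext (hm.2.2.1 _ _), fun a b c d e => Subtype.ext (hm.2.2.2 _ _ _ _ _)⟩
      · refine Continuous.subtype_mk ?_ _
        exact hc.comp (by fun_prop : Continuous fun p : ↥(A ∩ B) × ↥(A ∩ B) × ↥(A ∩ B) =>
          ((p.1 : Y), (p.2.1 : Y), (p.2.2 : Y)))
      · intro p U hU
        rw [nhds_subtype_eq_comap] at hU
        obtain ⟨W, hW, hWU⟩ := hU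
        obtain ⟨V, hV, hVW, hVc⟩ := hlc _ W hW
        refine ⟨Subtype.val ⁻¹' V, ?_, ?_, ?_⟩
        · rw [nhds_subtype_eq_comap]; exact ⟨V, hV, subset_rfl⟩
        · exact (Set.preimage_mono hVW).trans hWU
        · intro a ha b hb c hcc
          exact hVc _ ha _ hb (congrArg Subtype.val hcc)
      · intro N f hfi hfh
        let f1 : (Fin N → Bool) → Y := fun v => (f v).1
        have hf1 : CHom m f1 := fun x y z => congrArg Subtype.val (hfh x y z)
        have hf1i : Function.Injective f1 := Subtype.val_injective.comp hfi
        have hψ : ∀ i : Fin N, ∃ ψ : Y → Bool, MHom m ψ ∧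
            ∀ v, ∀ᶠ z in nhds (f1 v), ψ z = v i := by
          intro i
          obtain ⟨ψ, hψ, h0, h1⟩ := sepn (f1 fun _ => false) (f1 (ev i)) (hf1i.ne (ev_ne i))
          refine ⟨ψ, hψ, fun v => ?_⟩
          have e := hf1 (fun _ => false) (ev i) v
          rw [bmed_ev] at e
          have hct : Filter.Tendsto (fun z => m (f1 fun _ => false) (f1 (ev i)) z)
              (nhds (f1 v)) (nhds (m (f1 fun _ => false) (f1 (ev i)) (f1 v))) := by
            have : Continuous fun z => m (f1 fun _ => false) (f1 (ev i)) z :=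
              hc.comp (continuous_const.prodMk (continuous_const.prodMk continuous_id))
            exact this.tendsto _
          rw [← e] at hct
          have e0 := h0.self_of_nhds
          have e1 := h1.self_of_nhds
          by_cases hv : v i
          · simp only [hv, if_true] at hct ⊢
            filter_upwards [hct.eventually h1] with z hz
            rw [hψ, e0, e1] at hz
            revert hz; generalize ψ z = u; revert u; decide
          · simp only [hv, Bool.false_eq_true, if_false] at hct ⊢
            filter_upwards [hct.eventually h0] with z hz
            rw [hψ, e0, e1] at hz
            revert hz; generalize ψ z = u; revert u; decide
        choose ψ hψm hψn using hψ
        let θ : Fin (N+1) → Y → Bool := Fin.cons φ ψ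
        have hθ : ∀ i, MHom m (θ i) := by
          intro i
          refine Fin.cases hφ (fun i => hψm i) i
        have hp : ∀ v : Fin (N+1) → Bool, ∃ p, ∀ i, θ i p = v i := by
          intro v
          have h1 : ∀ᶠ z in nhds (f1 (Fin.tail v)), ∀ i, ψ i z = Fin.tail v i := by
            rw [Filter.eventually_all]
            exact fun i => hψn i _
          have h2 : f1 (Fin.tail v) ∈ closure {z | φ z = v 0} := by
            cases hv : v 0
            · exact (f (Fin.tail v)).2.1
            · exact (f (Fin.tail v)).2.2
          obtain ⟨z, hz1, hz2⟩ := ((mem_closure_iff_frequently.1 h2).and_eventually h1).exists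
          exact ⟨z, fun i => Fin.cases hz1 (fun i => hz2 i) i⟩
        choose p hp using hp
        obtain ⟨g, hg, hg2⟩ := cube_of_homs hm (N+1) θ hθ p hp
        have := hr (N+1) g (cube_inj_of_homs hg2) hg
        omega

end MedRank

namespace MedRank
section disc
variable {r : ℕ}

/-- Unit step. -/
def stp (i : Fin r) : Fin r → ℕ := Pi.single i 1

/-- Cubical coboundary mod 2. -/
def bnd (E : Finset (Fin r) → (Fin r → ℕ) → ZMod 2) (S : Finset (Fin r)) (x : Fin r → ℕ) : ZMod 2 :=
  ∑ i ∈ S, (E (S.erase i) x + E (S.erase i) (x + stp i))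

/-- Iterated cup product of coboundaries. -/
def QQ (s : Fin r → (Fin r → ℕ) → ZMod 2) : List (Fin r) → Finset (Fin r) → (Fin r → ℕ) → ZMod 2
  | [] => fun _ _ => 1
  | j :: l => bnd (fun S x => s j x * QQ s l S x)

lemma sum_offdiag_symm (S : Finset (Fin r)) (H : Fin r → Fin r → ZMod 2)
    (hH : ∀ i j, H i j = H j i) : ∑ i ∈ S, ∑ j ∈ S.erase i, H i j = 0 := by
  rw [Finset.sum_sigma']
  refine Finset.sum_involution (fun p _ => ⟨p.2, p.1⟩) ?_ ?_ ?_ ?_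
  · intro p _
    simp only [hH p.2 p.1]
    exact CharTwo.add_self_eq_zero _
  · intro p hp _ h
    simp only [Finset.mem_sigma, Finset.mem_erase] at hp
    apply hp.2.1
    have := congrArg Sigma.fst h
    exact this
  · intro p hp
    simp only [Finset.mem_sigma, Finset.mem_erase] at hp ⊢
    exact ⟨hp.2.2, fun h => hp.2.1 h.symm, hp.1⟩
  · intro p _; rfl

lemma bnd_bnd (E : Finset (Fin r) → (Fin r → ℕ) → ZMod 2) (S : Finset (Fin r)) (x : Fin r → ℕ) :
    bnd (bnd E) S x = 0 := by
  unfold bnd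
  simp only [← Finset.sum_add_distrib]
  apply sum_offdiag_symm
  intro i j
  rw [Finset.erase_right_comm, add_right_comm x (stp i) (stp j)]
  ring

lemma bnd_QQ (s : Fin r → (Fin r → ℕ) → ZMod 2) (l : List (Fin r)) (S : Finset (Fin r))
    (x : Fin r → ℕ) : bnd (QQ s l) S x = 0 := by
  cases l with
  | nil =>
    simp only [bnd, QQ]
    apply Finset.sum_eq_zero
    intro i _
    exact CharTwo.add_self_eq_zero _
  | cons j l => exact bnd_bnd _ _ _

/-- `y` is a vertex of the cube `(S, x)`. -/
def InCube (S : Finset (Fin r)) (x y : Fin r → ℕ) : Prop :=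
  ∀ i, x i ≤ y i ∧ y i ≤ x i + if i ∈ S then 1 else 0

lemma inCube_self (S : Finset (Fin r)) (x : Fin r → ℕ) : InCube S x x := fun i => by
  split_ifs <;> omega

lemma stp_apply (i k : Fin r) : stp i k = if k = i then 1 else 0 := by
  simp [stp, Pi.single_apply]

lemma inCube_erase {S : Finset (Fin r)} {x y : Fin r → ℕ} {i : Fin r}
    (h : InCube (S.erase i) x y) : InCube S x y := by
  intro k
  have := h k
  simp only [Finset.mem_erase] at this
  refine ⟨this.1, this.2.trans ?_⟩
  split_ifs <;> first | omega | (exfalso; tauto)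

lemma inCube_stp {S : Finset (Fin r)} {x y : Fin r → ℕ} {i : Fin r} (hi : i ∈ S)
    (h : InCube (S.erase i) (x + stp i) y) : InCube S x y := by
  intro k
  have := h k
  simp only [Finset.mem_erase, Pi.add_apply, stp_apply] at this
  by_cases hk : k = i
  · subst hk; simp [hi] at this ⊢; omega
  · simp [hk] at this ⊢; exact this

lemma QQ_const (s : Fin r → (Fin r → ℕ) → ZMod 2) (l : List (Fin r)) : ∀ (S : Finset (Fin r))
    (x : Fin r → ℕ) (j : Fin r) (_ : j ∈ l) (c : ZMod 2) (_ : ∀ y, InCube S x y → s j y = c),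
    QQ s l S x = 0 := by
  induction l with
  | nil => intro S x j hj; simp at hj
  | cons j' l ih =>
    intro S x j hj c hc
    simp only [List.mem_cons] at hj
    by_cases hjl : j ∈ l
    · simp only [QQ, bnd]
      apply Finset.sum_eq_zero
      intro i hi
      rw [ih (S.erase i) x j hjl c (fun y hy => hc y (inCube_erase hy)),
        ih (S.erase i) (x + stp i) j hjl c (fun y hy => hc y (inCube_stp hi hy))]
      simp
    · have hjj : j = j' := by tauto
      subst hjj
      have := bnd_QQ s l S x
      simp only [QQ, bnd] at this ⊢
      have h2 : ∀ i ∈ S, s j x * QQ s l (S.erase i) x + s j (x + stp i) * QQ s l (S.erase i) (x + stp i)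
          = c * (QQ s l (S.erase i) x + QQ s l (S.erase i) (x + stp i)) := by
        intro i hi
        rw [hc x (inCube_self _ _), hc (x + stp i) (inCube_stp hi (inCube_self _ _))]
        ring
      rw [Finset.sum_congr rfl h2, ← Finset.mul_sum, this, mul_zero]

/-- Box of grid points. -/
def box (N : ℕ) (S : Finset (Fin r)) (p : Fin r → ℕ) : Finset (Fin r → ℕ) :=
  Fintype.piFinset fun i => if i ∈ S then Finset.range N else {p i}

lemma mem_box {N : ℕ} {S : Finset (Fin r)} {p x : Fin r → ℕ} :
    x ∈ box N S p ↔ ∀ i, if i ∈ S then x i < N else x i = p i := by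
  simp only [box, Fintype.mem_piFinset]
  refine forall_congr' fun i => ?_
  split_ifs <;> simp

lemma mem_box_erase {N : ℕ} {S : Finset (Fin r)} {p x : Fin r → ℕ} {i : Fin r} {a : ℕ} :
    x ∈ box N (S.erase i) (Function.update p i a) ↔
      x i = a ∧ ∀ k, k ≠ i → if k ∈ S then x k < N else x k = p k := by
  rw [mem_box]
  constructor
  · intro h
    refine ⟨by simpa using h i, fun k hk => ?_⟩
    have := h k
    simpa [hk] using this
  · rintro ⟨h1, h2⟩ k
    by_cases hk : k = i
    · subst hk; simpa using h1
    · simpa [hk] using h2 k hk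

lemma box_split (N : ℕ) (S : Finset (Fin r)) (p : Fin r → ℕ) (i : Fin r) (hi : i ∈ S)
    (G : (Fin r → ℕ) → ZMod 2) : ∑ x ∈ box N S p, G x =
      ∑ a ∈ Finset.range N, ∑ x ∈ box N (S.erase i) (Function.update p i a), G x := by
  rw [← Finset.sum_fiberwise_of_maps_to (g := fun x => x i) (t := Finset.range N)]
  · apply Finset.sum_congr rfl
    intro a ha
    apply Finset.sum_congr _ (fun _ _ => rfl)
    ext x
    rw [Finset.mem_filter, mem_box_erase, mem_box]
    constructor
    · rintro ⟨h1, h2⟩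
      exact ⟨h2, fun k _ => h1 k⟩
    · rintro ⟨h1, h2⟩
      refine ⟨fun k => ?_, h1⟩
      by_cases hk : k = i
      · subst hk; simp only [hi, if_true]; rw [h1]; exact Finset.mem_range.1 ha
      · exact h2 k hk
  · intro x hx
    have := mem_box.1 hx i
    simpa [hi] using this

lemma box_shift (N : ℕ) (S : Finset (Fin r)) (p : Fin r → ℕ) (i : Fin r) (a : ℕ)
    (G : (Fin r → ℕ) → ZMod 2) :
    ∑ x ∈ box N (S.erase i) (Function.update p i a), G (x + stp i) =
      ∑ x ∈ box N (S.erase i) (Function.update p i (a + 1)), G x := by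
  refine Finset.sum_nbij' (fun x => x + stp i) (fun x => x - stp i) ?_ ?_ ?_ ?_ ?_
  · intro x hx
    rw [mem_box_erase] at hx ⊢
    refine ⟨by simp [stp_apply, hx.1], fun k hk => ?_⟩
    simpa [stp_apply, hk] using hx.2 k hk
  · intro x hx
    rw [mem_box_erase] at hx ⊢
    refine ⟨by simp [stp_apply, hx.1], fun k hk => ?_⟩
    simpa [stp_apply, hk] using hx.2 k hk
  · intro x hx
    ext k; simp
  · intro x hx
    rw [mem_box_erase] at hx
    ext k
    by_cases hk : k = i
    · subst hk; simp [stp_apply, hx.1]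
    · simp [stp_apply, hk]
  · intro x hx; rfl

lemma tele (N : ℕ) (h : ℕ → ZMod 2) : ∑ a ∈ Finset.range N, (h a + h (a + 1)) = h 0 + h N := by
  induction N with
  | zero => simp [CharTwo.add_self_eq_zero]
  | succ n ih =>
    rw [Finset.sum_range_succ, ih]
    have := CharTwo.add_self_eq_zero (h n)
    linear_combination this

lemma stokes (N : ℕ) (E : Finset (Fin r) → (Fin r → ℕ) → ZMod 2) (S : Finset (Fin r))
    (p : Fin r → ℕ) : ∑ x ∈ box N S p, bnd E S x =
      ∑ i ∈ S, (∑ x ∈ box N (S.erase i) (Function.update p i 0), E (S.erase i) x +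
        ∑ x ∈ box N (S.erase i) (Function.update p i N), E (S.erase i) x) := by
  unfold bnd
  rw [Finset.sum_comm]
  apply Finset.sum_congr rfl
  intro i hi
  rw [box_split N S p i hi]
  simp only [Finset.sum_add_distrib, box_shift]
  rw [← Finset.sum_add_distrib]
  exact tele N fun a => ∑ x ∈ box N (S.erase i) (Function.update p i a), E (S.erase i) x

lemma total (N : ℕ) (s : Fin r → (Fin r → ℕ) → ZMod 2) (h0 : ∀ i x, x i = 0 → s i x = 0)
    (h1 : ∀ i x, x i = N → s i x = 1) (l : List (Fin r)) : l.Nodup → ∀ p,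
    ∑ x ∈ box N l.toFinset p, QQ s l l.toFinset x = 1 := by
  induction l with
  | nil =>
    intro _ p
    have : box N (∅ : Finset (Fin r)) p = {p} := by
      ext x; rw [mem_box]; simp [funext_iff]
    simp [QQ, this]
  | cons j l ih =>
    intro hnd p
    rw [List.nodup_cons] at hnd
    set S := (j :: l).toFinset with hS
    have hjS : j ∈ S := by simp [hS]
    have hSj : S.erase j = l.toFinset := by
      rw [hS, List.toFinset_cons, Finset.erase_insert]; simpa using hnd.1
    simp only [QQ]
    rw [stokes, Finset.sum_eq_single_of_mem j hjS]
    · rw [hSj, Finset.sum_eq_zero, zero_add]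
      · rw [← ih hnd.2 (Function.update p j N)]
        apply Finset.sum_congr rfl
        intro x hx
        rw [← hSj, mem_box_erase] at hx
        rw [h1 j x hx.1, one_mul]
      · intro x hx
        rw [← hSj, mem_box_erase] at hx
        rw [h0 j x hx.1, zero_mul]
    · intro i hi hij
      have hil : i ∈ l := by
        have : i ∈ j :: l := by simpa [hS] using hi
        simpa [hij] using this
      have aux : ∀ a c, (∀ x : Fin r → ℕ, x i = a → s i x = c) →
          ∑ x ∈ box N (S.erase i) (Function.update p i a), s j x * QQ s l (S.erase i) x = 0 := by
        intro a c hac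
        apply Finset.sum_eq_zero
        intro x hx
        rw [mem_box_erase] at hx
        rw [QQ_const s l (S.erase i) x i hil c, mul_zero]
        intro y hy
        apply hac
        have := hy i
        simp at this
        omega
      rw [aux 0 0 (h0 i), aux N 1 (h1 i), add_zero]

/-- Discrete Poincaré–Miranda theorem. -/
theorem disc_miranda (N : ℕ) (s : Fin r → (Fin r → ℕ) → ZMod 2) (h0 : ∀ i x, x i = 0 → s i x = 0)
    (h1 : ∀ i x, x i = N → s i x = 1) : ∃ x : Fin r → ℕ, ∀ i,
      (∃ y, InCube Finset.univ x y ∧ s i y = 0) ∧ (∃ y, InCube Finset.univ x y ∧ s i y = 1) := by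
  have ht := total N s h0 h1 (List.finRange r) (List.nodup_finRange r) 0
  have hu : (List.finRange r).toFinset = Finset.univ := by ext; simp
  rw [hu] at ht
  obtain ⟨x, -, hx⟩ := Finset.exists_ne_zero_of_sum_ne_zero (by rw [ht]; exact one_ne_zero :
    ∑ x ∈ box N Finset.univ 0, QQ s (List.finRange r) Finset.univ x ≠ 0)
  have h01 : ∀ a : ZMod 2, (a ≠ 0 → a = 1) ∧ (a ≠ 1 → a = 0) := by decide
  refine ⟨x, fun i => ⟨?_, ?_⟩⟩
  · by_contra hcon
    push Not at hcon
    exact hx (QQ_const s _ _ x i (by simp) 1 fun y hy => (h01 _).1 (hcon y hy))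
  · by_contra hcon
    push Not at hcon
    exact hx (QQ_const s _ _ x i (by simp) 0 fun y hy => (h01 _).2 (hcon y hy))
end disc
end MedRank

namespace MedRank

lemma chain_exists {J : Type*} [MetricSpace J] [PreconnectedSpace J] (a b : J) {δ : ℝ}
    (hδ : 0 < δ) : ∃ (t : ℕ → J) (N : ℕ), t 0 = a ∧ (∀ n, N ≤ n → t n = b) ∧
      ∀ n, dist (t n) (t (n + 1)) < δ := by
  let R : Set J := {c | ∃ (t : ℕ → J) (N : ℕ), t 0 = a ∧ (∀ n, N ≤ n → t n = c) ∧
      ∀ n, dist (t n) (t (n + 1)) < δ}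
  have step : ∀ c c', c ∈ R → dist c c' < δ → c' ∈ R := by
    rintro c c' ⟨t, N, h0, h1, h2⟩ hcc
    refine ⟨fun n => if n ≤ N then t n else c', N + 1, by simp [h0], ?_, ?_⟩
    · intro n hn
      have : ¬ n ≤ N := by omega
      simp [this]
    · intro n
      by_cases hn : n + 1 ≤ N
      · have : n ≤ N := by omega
        simp only [hn, this, if_true]; exact h2 n
      · by_cases hn' : n ≤ N
        · have : n = N := by omega
          subst this
          simp [h1 n le_rfl, hcc]
        · simp [hn, hn', hδ]
  have hR : IsClopen R := by
    constructor
    · rw [← isOpen_compl_iff, Metric.isOpen_iff]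
      intro c hc
      refine ⟨δ, hδ, fun c' hc' hR => hc (step c' c hR ?_)⟩
      exact Metric.mem_ball.1 hc'
    · rw [Metric.isOpen_iff]
      intro c hc
      refine ⟨δ, hδ, fun c' hc' => step c c' hc ?_⟩
      rw [dist_comm]; exact Metric.mem_ball.1 hc'
  have hne : R.Nonempty := ⟨a, fun _ => a, 0, rfl, fun _ _ => rfl, fun _ => by simp [hδ]⟩
  have : b ∈ R := by rw [hR.eq_univ hne]; trivial
  exact this

/-- Poincaré–Miranda for products of compact connected spaces. -/
theorem miranda {r : ℕ} {J : Fin r → Type*} [∀ i, MetricSpace (J i)] [∀ i, CompactSpace (J i)]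
    [∀ i, PreconnectedSpace (J i)] (a b : ∀ i, J i) (g : (∀ i, J i) → (Fin r → ℝ))
    (hg : Continuous g) (ha : ∀ i u, u i = a i → g u i ≤ 0) (hb : ∀ i u, u i = b i → 0 ≤ g u i) :
    ∃ u, g u = 0 := by
  by_contra hcon
  push Not at hcon
  obtain ⟨u0, -, hu0⟩ := isCompact_univ.exists_isMinOn (s := (Set.univ : Set (∀ i, J i)))
    ⟨a, trivial⟩ (f := fun u => ‖g u‖) hg.norm.continuousOn
  have hε : 0 < ‖g u0‖ := norm_pos_iff.2 (hcon u0)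
  have huc := CompactSpace.uniformContinuous_of_continuous hg
  obtain ⟨δ, hδ, hδ2⟩ := Metric.uniformContinuous_iff.1 huc _ hε
  have hch := fun i => chain_exists (a i) (b i) hδ
  choose t N h0 hN hd using hch
  obtain ⟨M, hM1, hM⟩ : ∃ M : ℕ, 1 ≤ M ∧ ∀ i, N i ≤ M :=
    ⟨1 + ∑ i, N i, by omega, fun i => by
      have := Finset.single_le_sum (f := N) (fun _ _ => Nat.zero_le _) (Finset.mem_univ i)
      omega⟩
  let P : (Fin r → ℕ) → ∀ i, J i := fun x i => t i (x i)
  let s : Fin r → (Fin r → ℕ) → ZMod 2 := fun i x =>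
    if x i = 0 then 0 else if x i = M then 1 else if g (P x) i ≤ 0 then 0 else 1
  obtain ⟨x, hx⟩ := disc_miranda M s (fun i x hx => by simp [s, hx])
    (fun i x hx => by
      have : M ≠ 0 := by omega
      simp [s, hx, this])
  have hs0 : ∀ i y, s i y = 0 → g (P y) i ≤ 0 := by
    intro i y hy
    by_cases h1 : y i = 0
    · apply ha; simp only [P, h1, h0]
    · by_cases h2 : y i = M
      · simp [s, h1, h2] at hy
        omega
      · by_contra h3
        simp [s, h1, h2, h3] at hy
  have hs1 : ∀ i y, s i y = 1 → 0 ≤ g (P y) i := by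
    intro i y hy
    by_cases h1 : y i = 0
    · simp [s, h1] at hy
    · by_cases h2 : y i = M
      · apply hb; simp only [P, h2]; exact hN i M (hM i)
      · by_contra h3
        push Not at h3
        simp [s, h1, h2, h3.le] at hy
  have hclose : ∀ y, InCube Finset.univ x y → ∀ i, |g (P x) i - g (P y) i| < ‖g u0‖ := by
    intro y hy i
    have h1 : dist (P x) (P y) < δ := by
      rw [dist_pi_lt_iff hδ]
      intro k
      have := hy k
      simp only [Finset.mem_univ, if_true] at this
      have h2 : y k = x k ∨ y k = x k + 1 := by omega
      rcases h2 with h2 | h2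
      · simp [P, h2, hδ]
      · simp only [P, h2]; exact hd k _
    have h2 := hδ2 h1
    rw [dist_pi_lt_iff hε] at h2
    simpa [Real.dist_eq] using h2 i
  have : ‖g (P x)‖ < ‖g u0‖ := by
    rw [pi_norm_lt_iff hε]
    intro i
    obtain ⟨⟨y, hy, hy0⟩, ⟨y', hy', hy1⟩⟩ := hx i
    have e1 := abs_lt.1 (hclose y hy i)
    have e2 := abs_lt.1 (hclose y' hy' i)
    have e3 := hs0 i y hy0
    have e4 := hs1 i y' hy1
    rw [Real.norm_eq_abs, abs_lt]
    constructor <;> linarith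
  have h2 : ‖g u0‖ ≤ ‖g (P x)‖ := hu0 (Set.mem_univ _)
  linarith

/-- Separation dimension is monotone under continuous injections. -/
lemma sepDim_inj (n : ℕ) : ∀ (X Y : Type u) [TopologicalSpace X] [TopologicalSpace Y] (f : Y → X)
    (_ : Continuous f) (_ : Function.Injective f), SepDimLE n X → SepDimLE n Y := by
  induction n with
  | zero =>
    intro X Y _ _ f hf hi h
    exact ⟨fun y => h.false (f y)⟩
  | succ n ih =>
    intro X Y _ _ f hf hi h x y hxy
    obtain ⟨A, B, hA, hB, h1, h2, h3, h4⟩ := h (f x) (f y) (hi.ne hxy)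
    refine ⟨f ⁻¹' A, f ⁻¹' B, hA.preimage hf, hB.preimage hf, h1, h2, ?_, ?_⟩
    · rw [← Set.preimage_union, h3, Set.preimage_univ]
    · refine ih _ _ (fun z => (⟨f z.1, z.2⟩ : ↥(A ∩ B))) ?_ ?_ h4
      · exact Continuous.subtype_mk (hf.comp continuous_subtype_val) _
      · intro z w hzw
        exact Subtype.ext (hi (congrArg Subtype.val hzw))

lemma sepDim_set {K : Type u} [TopologicalSpace K] {n : ℕ} {Z : Set K} (hZ : IsClosed Z)
    (h : SepDimLE (n + 1) ↥Z) {x y : K} (hx : x ∈ Z) (hy : y ∈ Z) (hxy : x ≠ y) :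
    ∃ A B : Set K, IsClosed A ∧ IsClosed B ∧ x ∉ B ∧ y ∉ A ∧ A ∪ B = Z ∧ SepDimLE n ↥(A ∩ B) := by
  obtain ⟨A, B, hA, hB, h1, h2, h3, h4⟩ := h ⟨x, hx⟩ ⟨y, hy⟩ (fun h => hxy (congrArg Subtype.val h))
  refine ⟨Subtype.val '' A, Subtype.val '' B, hZ.isClosedEmbedding_subtypeVal.isClosedMap _ hA,
    hZ.isClosedEmbedding_subtypeVal.isClosedMap _ hB, ?_, ?_, ?_, ?_⟩
  · rintro ⟨z, hz, rfl⟩; exact h1 hz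
  · rintro ⟨z, hz, rfl⟩; exact h2 hz
  · rw [← Set.image_union, h3, Set.image_univ, Subtype.range_coe]
  · have hz : ∀ z : ↥(Subtype.val '' A ∩ Subtype.val '' B : Set K), ∃ hz : z.1 ∈ Z,
        (⟨z.1, hz⟩ : ↥Z) ∈ A ∩ B := by
      rintro ⟨z, ⟨w, hw, hwz⟩, ⟨w', hw', hwz'⟩⟩
      subst hwz
      have : w' = w := Subtype.ext hwz'
      subst this
      exact ⟨w'.2, hw, hw'⟩
    refine sepDim_inj n _ _ (fun z => (⟨⟨z.1, (hz z).1⟩, (hz z).2⟩ : ↥(A ∩ B))) ?_ ?_ h4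
    · exact Continuous.subtype_mk (Continuous.subtype_mk continuous_subtype_val _) _
    · intro z w hzw
      exact Subtype.ext (congrArg (fun q => q.1.1) hzw)

/-- Zero is an unstable value on `Z` for maps to `ℝⁿ`. -/
def Unst {K : Type*} [TopologicalSpace K] (n : ℕ) (Z : Set K) : Prop :=
  ∀ g : K → (Fin n → ℝ), Continuous g → ∀ ε > 0, ∃ g' : K → (Fin n → ℝ), Continuous g' ∧
    (∀ z, dist (g' z) (g z) ≤ ε) ∧ ∀ z ∈ Z, g' z ≠ 0

section
variable {K : Type u} [MetricSpace K] [CompactSpace K]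

lemma Unst.mono {n : ℕ} {Z Z' : Set K} (h : Unst n Z) (hs : Z' ⊆ Z) : Unst n Z' := by
  intro g hg ε hε
  obtain ⟨g', h1, h2, h3⟩ := h g hg ε hε
  exact ⟨g', h1, h2, fun z hz => h3 z (hs hz)⟩

lemma Unst.union {n : ℕ} {Z1 Z2 : Set K} (h1 : Unst n Z1) (h2 : Unst n Z2) (hZ : IsClosed Z1) :
    Unst n (Z1 ∪ Z2) := by
  intro g hg ε hε
  obtain ⟨g1, hg1, hd1, hn1⟩ := h1 g hg (ε / 2) (by positivity)
  obtain ⟨δ, hδ, hδ1⟩ : ∃ δ > 0, ∀ z ∈ Z1, δ ≤ ‖g1 z‖ := by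
    rcases Z1.eq_empty_or_nonempty with rfl | hne
    · exact ⟨1, one_pos, by simp⟩
    · obtain ⟨z0, hz0, hmin⟩ := hZ.isCompact.exists_isMinOn hne hg1.norm.continuousOn
      exact ⟨‖g1 z0‖, norm_pos_iff.2 (hn1 z0 hz0), fun z hz => hmin hz⟩
  obtain ⟨g2, hg2, hd2, hn2⟩ := h2 g1 hg1 (min (ε / 2) (δ / 2)) (by positivity)
  refine ⟨g2, hg2, fun z => ?_, ?_⟩
  · have a1 := hd1 z
    have a2 := (hd2 z).trans (min_le_left _ _)
    linarith [dist_triangle (g2 z) (g1 z) (g z)]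
  · rintro z (hz | hz)
    · intro h0
      have a2 := (hd2 z).trans (min_le_right _ _)
      rw [h0, dist_zero_left] at a2
      linarith [hδ1 z hz]
    · exact hn2 z hz

lemma Unst.biUnion {n : ℕ} {ι : Type*} (t : Finset ι) (Z : ι → Set K) (hc : ∀ i ∈ t, IsClosed (Z i))
    (h : ∀ i ∈ t, Unst n (Z i)) : Unst n (⋃ i ∈ t, Z i) := by
  classical
  induction t using Finset.induction_on with
  | empty =>
    intro g hg ε hε
    exact ⟨g, hg, fun z => by simp [hε.le], by simp⟩
  | insert a t ha ih =>
    rw [Finset.set_biUnion_insert]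
    exact Unst.union (h a (by simp)) (ih (fun i hi => hc i (by simp [hi]))
      (fun i hi => h i (by simp [hi]))) (hc a (by simp))

lemma part_ext {n : ℕ} {Z E F : Set K} (hZ : IsClosed Z) (hF : IsClosed F)
    (h : ∀ y ∈ F, ∃ A B : Set K, IsClosed A ∧ IsClosed B ∧ A ∪ B = Z ∧ Unst n (A ∩ B) ∧ y ∉ A ∧
      Disjoint E B) :
    ∃ A B : Set K, IsClosed A ∧ IsClosed B ∧ A ∪ B = Z ∧ Unst n (A ∩ B) ∧ Disjoint F A ∧
      Disjoint E B := by
  choose! A B hA hB hAB hU hy hE using h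
  obtain ⟨t, htF, ht⟩ := hF.isCompact.elim_nhds_subcover (fun y => (A y)ᶜ)
    (fun y hyF => (hA y hyF).isOpen_compl.mem_nhds (hy y hyF))
  refine ⟨Z ∩ ⋂ y ∈ t, A y, ⋃ y ∈ t, B y, ?_, ?_, ?_, ?_, ?_, ?_⟩
  · exact hZ.inter (isClosed_biInter fun y hyt => hA y (htF y hyt))
  · exact isClosed_biUnion_finset fun y hyt => hB y (htF y hyt)
  · ext z
    simp only [Set.mem_union, Set.mem_inter_iff, Set.mem_iInter, Set.mem_iUnion, exists_prop]
    constructor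
    · rintro (⟨hz, -⟩ | ⟨y, hyt, hz⟩)
      · exact hz
      · rw [← hAB y (htF y hyt)]; exact Or.inr hz
    · intro hz
      by_cases hcon : ∃ y ∈ t, z ∈ B y
      · exact Or.inr hcon
      · left
        refine ⟨hz, fun y hyt => ?_⟩
        rw [← hAB y (htF y hyt)] at hz
        exact hz.resolve_right fun hzb => hcon ⟨y, hyt, hzb⟩
  · refine (Unst.biUnion t (fun y => A y ∩ B y) (fun y hyt => (hA y (htF y hyt)).inter
      (hB y (htF y hyt))) (fun y hyt => hU y (htF y hyt))).mono ?_
    rintro z ⟨⟨-, hz⟩, hzB⟩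
    simp only [Set.mem_iInter, Set.mem_iUnion, exists_prop] at hz hzB ⊢
    obtain ⟨y, hyt, hzb⟩ := hzB
    exact ⟨y, hyt, hz y hyt, hzb⟩
  · rw [Set.disjoint_left]
    rintro z hz ⟨-, hzA⟩
    have := ht hz
    simp only [Set.mem_iInter, Set.mem_iUnion, exists_prop] at hzA this
    obtain ⟨y, hyt, hzy⟩ := this
    exact hzy (hzA y hyt)
  · rw [Set.disjoint_left]
    intro z hz hzB
    simp only [Set.mem_iUnion, exists_prop] at hzB
    obtain ⟨y, hyt, hzy⟩ := hzB
    exact Set.disjoint_left.1 (hE y (htF y hyt)) hz hzy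

lemma exists_dist_fun (A : Set K) (hA : IsClosed A) : ∃ f : K → ℝ, Continuous f ∧ (∀ z, 0 ≤ f z) ∧
    ∀ z, f z = 0 ↔ z ∈ A := by
  rcases A.eq_empty_or_nonempty with rfl | hne
  · exact ⟨fun _ => 1, continuous_const, fun _ => zero_le_one, fun z => by simp⟩
  · exact ⟨fun z => Metric.infDist z A, Metric.continuous_infDist_pt A,
      fun z => Metric.infDist_nonneg, fun z => (hA.mem_iff_infDist_zero hne).symm⟩

theorem unst_of_sepDim (n : ℕ) : ∀ (Z : Set K), IsClosed Z → SepDimLE n ↥Z → Unst n Z := by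
  induction n with
  | zero =>
    intro Z hZ h g hg ε hε
    exact ⟨g, hg, fun z => by simp [hε.le], fun z hz => (h.false ⟨z, hz⟩).elim⟩
  | succ n ih =>
    intro Z hZ h
    have part : ∀ E F : Set K, IsClosed E → IsClosed F → E ⊆ Z → F ⊆ Z → Disjoint E F →
        ∃ A B : Set K, IsClosed A ∧ IsClosed B ∧ A ∪ B = Z ∧ Unst n (A ∩ B) ∧ Disjoint F A ∧
          Disjoint E B := by
      intro E F hE hF hEZ hFZ hd
      have s1 : ∀ x ∈ E, ∃ A B : Set K, IsClosed A ∧ IsClosed B ∧ A ∪ B = Z ∧ Unst n (A ∩ B) ∧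
          Disjoint F A ∧ Disjoint {x} B := by
        intro x hx
        apply part_ext hZ hF
        intro y hy
        obtain ⟨A, B, hA, hB, h1, h2, h3, h4⟩ := sepDim_set hZ h (hEZ hx) (hFZ hy)
          (fun hxy => Set.disjoint_left.1 hd hx (hxy ▸ hy))
        exact ⟨A, B, hA, hB, h3, ih _ (hA.inter hB) h4, h2, Set.disjoint_singleton_left.2 h1⟩
      obtain ⟨B, A, hB, hA, h1, h2, h3, h4⟩ := part_ext (n := n) (E := F) hZ hE (fun x hx => by
        obtain ⟨A, B, hA, hB, h1, h2, h3, h4⟩ := s1 x hx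
        exact ⟨B, A, hB, hA, by rw [Set.union_comm, h1], by rwa [Set.inter_comm],
          Set.disjoint_singleton_left.1 h4, h3⟩)
      exact ⟨A, B, hA, hB, by rw [Set.union_comm, h1], by rwa [Set.inter_comm], h4, h3⟩
    intro g hg ε hε
    set e := ε / 2 with he
    have hepos : 0 < e := by positivity
    have hg0 : Continuous fun z => g z 0 := (continuous_apply 0).comp hg
    obtain ⟨A, B, hA, hB, hAB, hU, hF, hE⟩ := part (Z ∩ {z | g z 0 ≤ -e}) (Z ∩ {z | e ≤ g z 0})
      (hZ.inter (isClosed_le hg0 continuous_const)) (hZ.inter (isClosed_le continuous_const hg0))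
      Set.inter_subset_left Set.inter_subset_left (by
        rw [Set.disjoint_left]
        rintro z ⟨-, h1⟩ ⟨-, h2⟩
        have h1 : g z 0 ≤ -e := h1
        have h2 : e ≤ g z 0 := h2
        linarith)
    obtain ⟨fA, cA, pA, zA⟩ := exists_dist_fun A hA
    obtain ⟨fB, cB, pB, zB⟩ := exists_dist_fun B hB
    obtain ⟨gr, hgr, hgr1, hgr2⟩ := hU (fun z => Fin.tail (g z))
      (continuous_pi fun i => (continuous_apply i.succ).comp hg) ε hε
    let hh : K → ℝ := fun z => e * ((fA z - fB z) / (1 + (fA z + fB z)))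
    have hden : ∀ z, 0 < 1 + (fA z + fB z) := fun z => by linarith [pA z, pB z]
    have chh : Continuous hh := by
      refine continuous_const.mul ((cA.sub cB).div (continuous_const.add (cA.add cB)) fun z => ?_)
      exact (hden z).ne'
    have hhb : ∀ z, |hh z| ≤ e := by
      intro z
      have : |(fA z - fB z) / (1 + (fA z + fB z))| ≤ 1 := by
        rw [abs_div, abs_of_pos (hden z), div_le_one (hden z), abs_le]
        constructor <;> linarith [pA z, pB z]
      simp only [hh]
      rw [abs_mul, abs_of_pos hepos]
      nlinarith
    have hpos : ∀ z, z ∈ Z → z ∉ A → 0 < hh z := by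
      intro z hz hzA
      have hzB : z ∈ B := by rw [← hAB] at hz; exact hz.resolve_left hzA
      have h1 : fA z ≠ 0 := fun h => hzA ((zA z).1 h)
      have h2 : fB z = 0 := (zB z).2 hzB
      have h3 : 0 < fA z := lt_of_le_of_ne (pA z) h1.symm
      exact mul_pos hepos (div_pos (by linarith) (hden z))
    have hneg : ∀ z, z ∈ Z → z ∉ B → hh z < 0 := by
      intro z hz hzB
      have hzA : z ∈ A := by rw [← hAB] at hz; exact hz.resolve_right hzB
      have h1 : fB z ≠ 0 := fun h => hzB ((zB z).1 h)
      have h2 : fA z = 0 := (zA z).2 hzA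
      have h3 : 0 < fB z := lt_of_le_of_ne (pB z) h1.symm
      exact mul_neg_of_pos_of_neg hepos (div_neg_of_neg_of_pos (by linarith) (hden z))
    let g0 : K → ℝ := fun z => hh z + max (g z 0 - e) 0 + min (g z 0 + e) 0
    have cg0 : Continuous g0 := by
      refine (chh.add ?_).add ?_
      · exact (hg0.sub continuous_const).max continuous_const
      · exact (hg0.add continuous_const).min continuous_const
    refine ⟨fun z => Fin.cons (g0 z) (gr z), ?_, ?_, ?_⟩
    · apply continuous_pi
      intro i
      refine Fin.cases ?_ (fun i => ?_) i
      · simpa using cg0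
      · simp only [Fin.cons_succ]; exact (continuous_apply i).comp hgr
    · intro z
      rw [dist_pi_le_iff hε.le]
      intro i
      refine Fin.cases ?_ (fun i => ?_) i
      · simp only [Fin.cons_zero, g0]
        rw [Real.dist_eq, abs_le]
        have := abs_le.1 (hhb z)
        rcases le_total (g z 0 - e) 0 with h1 | h1 <;> rcases le_total (g z 0 + e) 0 with h2 | h2 <;>
          simp only [h1, h2, max_eq_left, max_eq_right, min_eq_left, min_eq_right] <;>
          constructor <;> linarith
      · simp only [Fin.cons_succ]
        exact ((dist_pi_le_iff hε.le).1 (hgr1 z)) i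
    · intro z hz h0
      have e0 : g0 z = 0 := by simpa using congrFun h0 0
      have er : gr z = 0 := by
        ext i; simpa using congrFun h0 i.succ
      have hzL : z ∉ A ∩ B := fun hL => hgr2 z hL er
      simp only [g0] at e0
      by_cases hzA : z ∈ A
      · have hzB : z ∉ B := fun hB => hzL ⟨hzA, hB⟩
        have h1 := hneg z hz hzB
        have h2 : ¬ e ≤ g z 0 := fun hc => Set.disjoint_left.1 hF ⟨hz, hc⟩ hzA
        have h3 : max (g z 0 - e) 0 = 0 := max_eq_right (by linarith)
        have h4 : min (g z 0 + e) 0 ≤ 0 := min_le_right _ _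
        linarith
      · have hzB : z ∈ B := by rw [← hAB] at hz; exact hz.resolve_left hzA
        have h1 := hpos z hz hzA
        have h2 : ¬ g z 0 ≤ -e := fun hc => Set.disjoint_left.1 hE ⟨hz, hc⟩ hzB
        have h3 : min (g z 0 + e) 0 = 0 := min_eq_right (by linarith)
        have h4 : 0 ≤ max (g z 0 - e) 0 := le_max_right _ _
        linarith
end

/-- Lower bound for products of compact connected nondegenerate spaces. -/
theorem not_sepDim_prod {r : ℕ} {J : Fin r → Type u} [∀ i, MetricSpace (J i)]
    [∀ i, CompactSpace (J i)] [∀ i, PreconnectedSpace (J i)] (a b : ∀ i, J i)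
    (hab : ∀ i, a i ≠ b i) : ¬ SepDimLE r (∀ i, J i) := by
  intro h
  have h1 : SepDimLE r ↥(Set.univ : Set (∀ i, J i)) :=
    sepDim_inj r _ _ Subtype.val continuous_subtype_val Subtype.val_injective h
  have hU := unst_of_sepDim r _ isClosed_univ h1
  obtain ⟨ε, hε, hε1⟩ : ∃ ε > 0, ∀ i, ε ≤ dist (a i) (b i) := by
    rcases isEmpty_or_nonempty (Fin r) with he | he
    · exact ⟨1, one_pos, fun i => he.elim i⟩
    · obtain ⟨i0, hi0⟩ := Finite.exists_min fun i => dist (a i) (b i)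
      exact ⟨_, dist_pos.2 (hab i0), hi0⟩
  obtain ⟨g, hg, hg1, hg2⟩ := hU (fun u i => dist (u i) (a i) - dist (u i) (b i))
    (by fun_prop) ε hε
  obtain ⟨u, hu⟩ := miranda a b g hg
    (fun i u hu => by
      have := (dist_pi_le_iff hε.le).1 (hg1 u) i
      rw [Real.dist_eq] at this
      simp only [hu, dist_self] at this
      have h3 := abs_le.1 this
      linarith [hε1 i])
    (fun i u hu => by
      have := (dist_pi_le_iff hε.le).1 (hg1 u) i
      rw [Real.dist_eq] at this
      simp only [hu, dist_self] at this
      have h3 := abs_le.1 this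
      have := hε1 i
      rw [dist_comm] at this
      linarith [hε1 i])
  exact hg2 u trivial hu
end MedRank

namespace MedRank
section low
variable {X : Type u} {m : X → X → X → X}

lemma hom_f {φ : X → Bool} (hφ : MHom m φ) {z w t : X} (ht : t ∈ mInterval m z w) :
    maj (φ z) (φ w) (φ t) = φ t := by
  have h : m z w t = t := ht
  rw [← hφ, h]

theorem edge_linear (h : IsMedianAlgebra m) {r : ℕ}
    (hrank : ∀ n : ℕ, ∀ f : (Fin n → Bool) → X, Function.Injective f → CHom m f → n ≤ r)
    {f : (Fin r → Bool) → X} (hinj : Function.Injective f) (hf : CHom m f) (i : Fin r)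
    {a b : X} (ha : a ∈ mInterval m (f fun _ => false) (f (ev i)))
    (hb : b ∈ mInterval m (f fun _ => false) (f (ev i))) :
    m (f fun _ => false) a b = a ∨ m (f fun _ => false) a b = b := by
  classical
  by_contra hcon
  push Not at hcon
  obtain ⟨hca, hcb⟩ := hcon
  set z := f (fun _ => false) with hz
  obtain ⟨φ1, h1, h1c, h1a⟩ := sep_points h hca
  obtain ⟨φ2, h2, h2c, h2b⟩ := sep_points h hcb
  have key : ∀ (x y e c : Bool), maj x y c = c → maj x y e = e → maj x c e = false →
      c = true → e = false ∧ x = false ∧ y = true := by decide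
  obtain ⟨h1b, h1z, h1e⟩ := key _ _ _ _ (hom_f h1 ha) (hom_f h1 hb) (by rw [← h1]; exact h1c) h1a
  obtain ⟨h2a, h2z, h2e⟩ := key _ _ _ _ (hom_f h2 hb) (hom_f h2 ha)
    (by rw [← h2, c23 h]; exact h2c) h2b
  have hψ : ∀ j : Fin r, ∃ φ : X → Bool, MHom m φ ∧ φ z = false ∧ φ (f (ev j)) = true := fun j =>
    sep_points h (fun he => ev_ne j (hinj he))
  choose ψ hψm hψ0 hψ1 using hψ
  have hψf : ∀ j v, ψ j (f v) = v j := fun j v => hom_cube hf (hψm j) j (hψ0 j) (hψ1 j) v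
  have h1f : ∀ v, φ1 (f v) = v i := fun v => hom_cube hf h1 i h1z h1e v
  have h2f : ∀ v, φ2 (f v) = v i := fun v => hom_cube hf h2 i h2z h2e v
  let s : Bool → Bool → X := fun x y =>
    if x then (if y then m (f (ev i)) a b else a) else (if y then b else m z a b)
  have hs1 : ∀ x y, φ1 (s x y) = x := by
    intro x y
    cases x <;> cases y <;> simp [s, h1 _ _ _, h1a, h1b, h1z, h1e, maj]
  have hs2 : ∀ x y, φ2 (s x y) = y := by
    intro x y
    cases x <;> cases y <;> simp [s, h2 _ _ _, h2a, h2b, h2z, h2e, maj]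
  let θ : Fin (r + 1) → X → Bool := Fin.cons φ2 (Function.update ψ i φ1)
  have hθ : ∀ j, MHom m (θ j) := by
    intro j
    refine Fin.cases ?_ (fun j => ?_) j
    · exact h2
    · by_cases hj : j = i
      · subst hj; simpa [θ] using h1
      · simpa [θ, hj] using hψm j
  let p : (Fin (r + 1) → Bool) → X := fun v =>
    m (s (v i.succ) (v 0)) (f (Function.update (fun j => v j.succ) i false))
      (f (Function.update (fun j => v j.succ) i true))
  have mj1 : ∀ x, maj x false true = x := by decide
  have mj2 : ∀ x y, maj x y y = y := by decide
  have hp : ∀ v j, θ j (p v) = v j := by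
    intro v j
    refine Fin.cases ?_ (fun j => ?_) j
    · simp only [θ, Fin.cons_zero, p]
      rw [h2, hs2, h2f, h2f]; simp [mj1]
    · by_cases hj : j = i
      · subst hj
        simp only [θ, Fin.cons_succ, p, Function.update_self]
        rw [h1, hs1, h1f, h1f]; simp [mj1]
      · simp only [θ, Fin.cons_succ, p, Function.update_of_ne hj]
        rw [hψm, hψf, hψf, Function.update_of_ne hj, Function.update_of_ne hj, mj2]
  obtain ⟨g, hg, hg2⟩ := cube_of_homs h (r + 1) θ hθ p hp
  have := hrank (r + 1) g (cube_inj_of_homs hg2) hg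
  omega

theorem edge_compact [TopologicalSpace X] (h : IsMedianAlgebra m)
    (hlc : ∀ x : X, ∀ U ∈ nhds x, ∃ V ∈ nhds x, V ⊆ U ∧ MConvex m V) {z e : X}
    (hpre : IsPreconnected (mInterval m z e))
    (hlin : ∀ a ∈ mInterval m z e, ∀ b ∈ mInterval m z e, m z a b = a ∨ m z a b = b) :
    IsCompact (mInterval m z e) := by
  classical
  have hzJ : z ∈ mInterval m z e := by change m z e z = z; exact aba h _ _
  have heJ : e ∈ mInterval m z e := by change m z e e = e; exact baa h _ _
  have hsub : ∀ t ∈ mInterval m z e, mInterval m z t ⊆ mInterval m z e := by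
    intro t ht p hp
    apply hom_ext h
    intro φ hφ
    have h1 := hom_f hφ ht
    have h2 := hom_f hφ hp
    rw [hφ]
    revert h1 h2
    generalize φ z = x; generalize φ e = y; generalize φ t = c; generalize φ p = d
    revert x y c d; decide
  apply isCompact_of_finite_subcover
  intro ι U hU hcov
  let S : Set X := {t | ∃ F : Finset ι, mInterval m z t ⊆ ⋃ i ∈ F, U i}
  have step : ∀ t ∈ mInterval m z e, ∃ V ∈ nhds t, ∀ s1 ∈ V ∩ mInterval m z e,
      ∀ s2 ∈ V ∩ mInterval m z e, s1 ∈ S → s2 ∈ S := by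
    intro t ht
    obtain ⟨i, hi⟩ := Set.mem_iUnion.1 (hcov ht)
    obtain ⟨V, hV, hVU, hVc⟩ := hlc t (U i) ((hU i).mem_nhds hi)
    refine ⟨V, hV, ?_⟩
    rintro s1 ⟨hs1V, hs1⟩ s2 ⟨hs2V, hs2⟩ ⟨F, hF⟩
    refine ⟨insert i F, ?_⟩
    intro p hp
    have hpJ := hsub s2 hs2 hp
    rcases hlin p hpJ s1 hs1 with h1 | h1
    · have : p ∈ mInterval m z s1 := by change m z s1 p = p; rw [c23 h]; exact h1
      have := hF this
      simp only [Set.mem_iUnion] at this ⊢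
      obtain ⟨j, hj, hj2⟩ := this
      exact ⟨j, Finset.mem_insert_of_mem hj, hj2⟩
    · have : p ∈ mInterval m s1 s2 := by
        change m s1 s2 p = p
        apply hom_ext h
        intro φ hφ
        have e1 := hom_f hφ hp
        have e2 : maj (φ z) (φ p) (φ s1) = φ s1 := by rw [← hφ, h1]
        rw [hφ]
        revert e1 e2
        generalize φ z = x; generalize φ s1 = y; generalize φ s2 = c; generalize φ p = d
        revert x y c d; decide
      have := hVU (hVc s1 hs1V s2 hs2V this)
      simp only [Set.mem_iUnion]
      exact ⟨i, Finset.mem_insert_self _ _, this⟩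
  choose! V hV hVs using step
  have hself : ∀ t ∈ mInterval m z e, t ∈ V t := fun t ht => mem_of_mem_nhds (hV t ht)
  have hzS : z ∈ S := by
    obtain ⟨i, hi⟩ := Set.mem_iUnion.1 (hcov hzJ)
    refine ⟨{i}, ?_⟩
    intro p hp
    have : m z z p = p := hp
    rw [maa h] at this
    subst this
    simpa using hi
  have heS : e ∈ S := by
    by_contra heS
    have := hpre (⋃ t ∈ mInterval m z e ∩ S, interior (V t))
      (⋃ t ∈ mInterval m z e \ S, interior (V t))
      (isOpen_biUnion fun _ _ => isOpen_interior) (isOpen_biUnion fun _ _ => isOpen_interior)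
      ?_ ⟨z, hzJ, Set.mem_biUnion ⟨hzJ, hzS⟩ (mem_interior_iff_mem_nhds.2 (hV z hzJ))⟩
      ⟨e, heJ, Set.mem_biUnion ⟨heJ, heS⟩ (mem_interior_iff_mem_nhds.2 (hV e heJ))⟩
    · obtain ⟨x, hxJ, hx1, hx2⟩ := this
      simp only [Set.mem_iUnion] at hx1 hx2
      obtain ⟨t, ⟨htJ, htS⟩, hxt⟩ := hx1
      obtain ⟨t', ⟨htJ', htS'⟩, hxt'⟩ := hx2
      have hxS := hVs t htJ t ⟨hself t htJ, htJ⟩ x ⟨interior_subset hxt, hxJ⟩ htS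
      exact htS' (hVs t' htJ' x ⟨interior_subset hxt', hxJ⟩ t' ⟨hself t' htJ', htJ'⟩ hxS)
    · intro t ht
      by_cases htS : t ∈ S
      · left; exact Set.mem_biUnion (x := t) ⟨ht, htS⟩ (mem_interior_iff_mem_nhds.2 (hV t ht))
      · right; exact Set.mem_biUnion (x := t) ⟨ht, htS⟩ (mem_interior_iff_mem_nhds.2 (hV t ht))
  exact heS

theorem lower {X : Type u} [MetricSpace X] [ConnectedSpace X]
    (m : X → X → X → X) (h : IsMedianAlgebra m)
    (hcont : Continuous fun p : X × X × X => m p.1 p.2.1 p.2.2)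
    (hlc : ∀ x : X, ∀ U ∈ nhds x, ∃ V ∈ nhds x, V ⊆ U ∧ MConvex m V)
    (r : ℕ)
    (hrank : ∀ n : ℕ, ∀ f : (Fin n → Bool) → X, Function.Injective f → CHom m f → n ≤ r)
    (f : (Fin r → Bool) → X) (hinj : Function.Injective f) (hf : CHom m f) :
    ¬ SepDimLE r X := by
  classical
  intro hs
  set z := f (fun _ => false) with hz
  set w := f (fun _ => true) with hw
  let J : Fin r → Type u := fun i => ↥(mInterval m z (f (ev i)))
  have hpre : ∀ i, IsPreconnected (mInterval m z (f (ev i))) := by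
    intro i
    have : mInterval m z (f (ev i)) = Set.range (fun u => m z (f (ev i)) u) := by
      ext x
      constructor
      · intro hx; exact ⟨x, hx⟩
      · rintro ⟨u, rfl⟩; exact idem h _ _ _
    rw [this]
    apply isPreconnected_range
    exact hcont.comp (by fun_prop : Continuous fun u : X => (z, f (ev i), u))
  have hcomp : ∀ i, IsCompact (mInterval m z (f (ev i))) := fun i =>
    edge_compact h hlc (hpre i) (fun a ha b hb => edge_linear h hrank hinj hf i ha hb)
  have : ∀ i, PreconnectedSpace (J i) := fun i => Subtype.preconnectedSpace (hpre i)
  have : ∀ i, CompactSpace (J i) := fun i => isCompact_iff_compactSpace.1 (hcomp i)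
  let a : ∀ i, J i := fun i => ⟨z, aba h _ _⟩
  let b : ∀ i, J i := fun i => ⟨f (ev i), baa h _ _⟩
  have hab : ∀ i, a i ≠ b i := fun i he => ev_ne i (hinj (congrArg Subtype.val he))
  let G : List (Fin r) → (∀ i, J i) → X := fun l u => l.foldr (fun i acc => m w (u i).1 acc) z
  have hGc : ∀ l, Continuous (G l) := by
    intro l
    induction l with
    | nil => exact continuous_const
    | cons i l ih =>
      exact hcont.comp (continuous_const.prodMk
        ((continuous_subtype_val.comp (continuous_apply i)).prodMk ih))
  have hew : ∀ i, m z (f (ev i)) w = f (ev i) := by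
    intro i
    rw [hz, hw, ← hf]
    congr 1
    funext j
    simp [bmed]
  have heu : ∀ i j, i ≠ j → ∀ t ∈ mInterval m z (f (ev j)), m z (f (ev i)) t = z := by
    intro i j hij t ht
    have hz' : m z (f (ev i)) (f (ev j)) = z := by
      rw [hz, ← hf]
      congr 1
      funext k
      by_cases hk : k = i
      · subst hk; simp [bmed, ev, hij]
      · simp [bmed, ev, hk]
    have ht' : m z (f (ev j)) t = t := ht
    rw [← ht', dst h, aba h, hz', maa h]
  have hG : ∀ u i l, m z (f (ev i)) (G l u) = if i ∈ l then (u i).1 else z := by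
    intro u i l
    induction l with
    | nil => simp [G, aba h]
    | cons j l ih =>
      have hui : m z (f (ev i)) (u i).1 = (u i).1 := (u i).2
      have e : G (j :: l) u = m w (u j).1 (G l u) := rfl
      rw [e, dst3 h, hew, ih]
      by_cases hij : i = j
      · subst hij
        rw [hui]
        split_ifs with h1 h2 h2
        · exact baa h _ _
        · simp at h2
        · rw [crot h, crot h, hui]
        · simp at h2
      · rw [heu i j hij _ (u j).2]
        simp only [List.mem_cons, hij, false_or]
        split_ifs with h1
        · rw [c12 h, hui]
        · exact baa h _ _
  refine not_sepDim_prod a b hab (sepDim_inj r X _ (G (List.finRange r)) (hGc _) ?_ hs)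
  intro u v huv
  funext i
  apply Subtype.ext
  have h1 := hG u i (List.finRange r)
  have h2 := hG v i (List.finRange r)
  rw [huv, h2] at h1
  simpa using h1.symm

end low
end MedRank

/-- A connected metric space with a Lipschitz, locally convex median of rank `r`
has separation dimension exactly `r`. -/
theorem sepDim_eq_rank {X : Type u} [MetricSpace X] [ConnectedSpace X]
    (m : X → X → X → X) (hmed : IsMedianAlgebra m)
    (k : ℝ) (hk : 0 ≤ k)
    (hlip : ∀ a b c a' b' c' : X,
      dist (m a b c) (m a' b' c') ≤ k * (dist a a' + dist b b' + dist c c'))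
    (hlc : ∀ x : X, ∀ U ∈ nhds x, ∃ V ∈ nhds x, V ⊆ U ∧ MConvex m V)
    (r : ℕ)
    (hrank : ∀ n : ℕ, ∀ f : (Fin n → Bool) → X, Function.Injective f →
      (∀ x y z, f (bmed x y z) = m (f x) (f y) (f z)) → n ≤ r)
    (hex : ∃ f : (Fin r → Bool) → X, Function.Injective f ∧
      ∀ x y z, f (bmed x y z) = m (f x) (f y) (f z)) :
    SepDimLE (r + 1) X ∧ ¬ SepDimLE r X := by
  have hcont : Continuous fun p : X × X × X => m p.1 p.2.1 p.2.2 := by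
    rw [continuous_iff_continuousAt]
    intro q
    unfold ContinuousAt
    rw [tendsto_iff_dist_tendsto_zero]
    have hc : Continuous fun p : X × X × X =>
        k * (dist p.1 q.1 + dist p.2.1 q.2.1 + dist p.2.2 q.2.2) := by fun_prop
    have ht := hc.tendsto q
    simp only [dist_self, add_zero, mul_zero] at ht
    exact squeeze_zero (fun _ => dist_nonneg) (fun p => hlip _ _ _ _ _ _) ht
  obtain ⟨f, hinj, hf⟩ := hex
  exact ⟨MedRank.upper (r + 1) X m hmed hcont hlc
      (fun N g hi hg => Nat.lt_succ_of_le (hrank N g hi hg)),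
    MedRank.lower m hmed hcont hlc r hrank f hinj hf⟩
end

section
/- There exists a map μ : (ℝ²)³ → ℝ² which is a median on ℝ² (it satisfies the median algebra axioms) and which is continuous with respect to the L¹ metric on ℝ², but which is not Lipschitz: for no constant k ≥ 0 does d(μ(a,b,c), μ(a',b',c')) ≤ k(d(a,a') + d(b,b') + d(c,c')) hold for all a, b, c, a', b', c' ∈ ℝ². (Such a median is obtained as the image of the standard coordinatewise L¹ median under a non-Lipschitz diffeomorphism of ℝ².) -/
/-- The median of three reals. -/
noncomputable def med (a b c : ℝ) : ℝ := max (min a b) (min (max a b) c)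

lemma med_comm (a b c : ℝ) : med a b c = med b a c := by
  unfold med; rw [min_comm, max_comm a b]

lemma med_rot (a b c : ℝ) : med a b c = med b c a := by
  unfold med; grind

lemma med_self (a b : ℝ) : med a a b = a := by
  unfold med; grind

lemma med_of_le {a b : ℝ} (h : a ≤ b) (x : ℝ) : med a b x = max a (min b x) := by
  unfold med; rw [min_eq_left h, max_eq_right h]

lemma med_clamp {a b p q : ℝ} (h : a ≤ b) (hp : a ≤ p) (hp' : p ≤ b) (hq : a ≤ q)
    (hq' : q ≤ b) (e : ℝ) : med p q (max a (min b e)) = med p q e := by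
  unfold med; grind

lemma med_mono_map {f : ℝ → ℝ} (hf : Monotone f) (c d e : ℝ) :
    f (med c d e) = med (f c) (f d) (f e) := by
  unfold med; rw [hf.map_max, hf.map_min, hf.map_min, hf.map_max]

lemma med_assoc_of_le {a b : ℝ} (h : a ≤ b) (c d e : ℝ) :
    med a b (med c d e) = med (med a b c) (med a b d) e := by
  have hf : Monotone (fun x : ℝ => max a (min b x)) := fun x y hxy =>
    max_le_max le_rfl (min_le_min le_rfl hxy)
  have h1 := med_mono_map hf c d e
  simp only [med_of_le h]
  refine h1.trans ?_
  exact med_clamp h (le_max_left _ _) (max_le h (min_le_left _ _)) (le_max_left _ _)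
    (max_le h (min_le_left _ _)) e

lemma med_assoc (a b c d e : ℝ) :
    med a b (med c d e) = med (med a b c) (med a b d) e := by
  rcases le_total a b with h | h
  · exact med_assoc_of_le h c d e
  · rw [med_comm a b, med_comm a b, med_comm a b]; exact med_assoc_of_le h c d e

/-- The coordinatewise median transported by the shear `(x, y) ↦ (x, y + x ^ 2)`. -/
noncomputable def shearMed (a b c : PiLp 1 fun _ : Fin 2 => ℝ) : PiLp 1 fun _ : Fin 2 => ℝ :=
  WithLp.toLp 1 ![med (a 0) (b 0) (c 0),
    med (a 1 + a 0 ^ 2) (b 1 + b 0 ^ 2) (c 1 + c 0 ^ 2) - med (a 0) (b 0) (c 0) ^ 2]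

lemma shearMed_zero (a b c : PiLp 1 fun _ : Fin 2 => ℝ) :
    shearMed a b c 0 = med (a 0) (b 0) (c 0) := by simp [shearMed]

lemma shearMed_one (a b c : PiLp 1 fun _ : Fin 2 => ℝ) :
    shearMed a b c 1 = med (a 1 + a 0 ^ 2) (b 1 + b 0 ^ 2) (c 1 + c 0 ^ 2)
      - med (a 0) (b 0) (c 0) ^ 2 := by simp [shearMed]

lemma plane_ext {a b : PiLp 1 fun _ : Fin 2 => ℝ} (h0 : a 0 = b 0) (h1 : a 1 = b 1) :
    a = b := by
  ext i; fin_cases i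
  · exact h0
  · exact h1

lemma plane_dist (a b : PiLp 1 fun _ : Fin 2 => ℝ) :
    dist a b = |a 0 - b 0| + |a 1 - b 1| := by
  rw [PiLp.dist_eq_sum (by simp)]
  simp [Real.dist_eq]

/-- There is a continuous median on `(ℝ², L¹)` which is not Lipschitz. -/
theorem exists_continuous_not_lipschitz_median :
    ∃ m : (PiLp 1 fun _ : Fin 2 => ℝ) → (PiLp 1 fun _ : Fin 2 => ℝ) →
        (PiLp 1 fun _ : Fin 2 => ℝ) → (PiLp 1 fun _ : Fin 2 => ℝ),
      IsMedianAlgebra m ∧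
      Continuous (fun p : (PiLp 1 fun _ : Fin 2 => ℝ) × (PiLp 1 fun _ : Fin 2 => ℝ) ×
        (PiLp 1 fun _ : Fin 2 => ℝ) => m p.1 p.2.1 p.2.2) ∧
      ¬ ∃ k : ℝ, 0 ≤ k ∧ ∀ a b c a' b' c',
        dist (m a b c) (m a' b' c') ≤ k * (dist a a' + dist b b' + dist c c') := by
  refine ⟨shearMed, ⟨?_, ?_, ?_, ?_⟩, ?_, ?_⟩
  · intro a b c
    apply plane_ext
    · simp only [shearMed_zero]; exact med_comm _ _ _
    · simp only [shearMed_one]; rw [med_comm (a 0), med_comm (a 1 + _)]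
  · intro a b c
    apply plane_ext
    · simp only [shearMed_zero]; exact med_rot _ _ _
    · simp only [shearMed_one]; rw [med_rot (a 0), med_rot (a 1 + _)]
  · intro a b
    apply plane_ext
    · simp only [shearMed_zero, med_self]
    · simp only [shearMed_one, med_self]; ring
  · intro a b c d e
    apply plane_ext
    · simp only [shearMed_zero]; exact med_assoc _ _ _ _ _
    · simp only [shearMed_one, shearMed_zero, sub_add_cancel]
      rw [med_assoc (a 0), med_assoc (a 1 + _)]
  · unfold shearMed med
    refine (PiLp.continuous_toLp 1 _).comp (continuous_pi fun i => ?_)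
    fin_cases i
    · simp; fun_prop
    · simp; fun_prop
  · rintro ⟨k, hk, h⟩
    have h := h (WithLp.toLp 1 ![k, 0]) (WithLp.toLp 1 ![0, (k + 1) ^ 2])
      (WithLp.toLp 1 ![k + 1, (k + 1) ^ 2]) (WithLp.toLp 1 ![k + 1, 0])
      (WithLp.toLp 1 ![0, (k + 1) ^ 2]) (WithLp.toLp 1 ![k + 1, (k + 1) ^ 2])
    have e1 : med k 0 (k + 1) = k := by unfold med; grind
    have e2 : med (k + 1) 0 (k + 1) = k + 1 := by unfold med; grind
    have e3 : med (k ^ 2) ((k + 1) ^ 2) ((k + 1) ^ 2 + (k + 1) ^ 2) = (k + 1) ^ 2 := by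
      have : k ^ 2 ≤ (k + 1) ^ 2 := by nlinarith
      have : 0 ≤ (k + 1) ^ 2 := by positivity
      rw [med_of_le (by assumption), min_eq_left (by linarith), max_eq_right (by assumption)]
    have e4 : med ((k + 1) ^ 2) ((k + 1) ^ 2) ((k + 1) ^ 2 + (k + 1) ^ 2) = (k + 1) ^ 2 :=
      med_self _ _
    simp only [dist_self, add_zero] at h
    rw [plane_dist, plane_dist] at h
    simp only [shearMed_zero, shearMed_one] at h
    simp [e1, e2, e3, e4] at h
    have := le_abs_self ((k + 1) ^ 2 - k ^ 2)
    nlinarith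
end
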